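/- For n, k ≥ 1, the polynomial x·b_n^{(k)}(x) from the symmetric decomposition A_n^{(k)}(x) = a_n^{(k)}(x) + x·b_n^{(k)}(x) is γ-positive with center n/2: x·b_n^{(k)}(x) = Σ_{i=1}^{⌊n/2⌋} γ̂_{n,k,i} x^i (1+x)^{n−2i}, where γ̂_{n,k,i} counts increasing pruned even k-ary forests on {1,...,n} whose rightmost tree is neither a singleton nor has its first k−1 root-children all leaves, having i old leaves, no young leaves, and no removable old or removable young leaves. In particular A_n^{(k)}(x) is bi-γ-positive and hence alternating increasing. -/

import Mathlib

open Polynomial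
open scoped Classical

noncomputable section

/-!  Increasing pruned even `k`-ary forests on a linearly ordered label set `α` are
encoded by parent functions `f : α → Option (α × Fin k)`: `f x = some (y, s)` means the
labeled node `x` is attached to the `s`-th (unlabeled) child of the labeled node `y`,
and `f x = none` means `x` is the root of a component.  The increasing condition says
that labels of the children of each node increase, so the ordered-tree structure is
determined by `f`; components are ordered by their (increasing) root labels.  -/

/-- The labeled node `u` has a labeled grand child (so it is an internal labeled node
carrying its `k` unlabeled children in the pruned tree). -/
def hasChild {α : Type} {k : ℕ} (f : α → Option (α × Fin k)) (u : α) : Prop :=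
  ∃ x s, f x = some (u, s)

/-- `f` encodes an increasing pruned even `k`-ary forest: parents carry smaller labels. -/
def IsForest {α : Type} [LT α] {k : ℕ} (f : α → Option (α × Fin k)) : Prop :=
  ∀ x y s, f x = some (y, s) → y < x

/-- `f` encodes an increasing pruned even `k`-ary tree: a forest with a unique root. -/
def IsTree {α : Type} [LT α] {k : ℕ} (f : α → Option (α × Fin k)) : Prop :=
  IsForest f ∧ ∃! r, f r = none

/-- `lleaf`: the number of labeled leaves. -/
noncomputable def lleafStat {α : Type} [Fintype α] {k : ℕ}
    (f : α → Option (α × Fin k)) : ℕ :=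
  (Finset.univ.filter fun u => ¬ hasChild f u).card

/-- `si`: the number of singleton components (roots that are leaves). -/
noncomputable def siStat {α : Type} [Fintype α] {k : ℕ}
    (f : α → Option (α × Fin k)) : ℕ :=
  (Finset.univ.filter fun u => f u = none ∧ ¬ hasChild f u).card

/-- A non-root labeled node is old if it carries the greatest label among all the
grand children of its grand parent. -/
def oldNode {α : Type} [LinearOrder α] {k : ℕ}
    (f : α → Option (α × Fin k)) (v : α) : Prop :=
  ∃ y s, f v = some (y, s) ∧ ∀ x : α, (∃ t, f x = some (y, t)) → x ≤ v

/-- A non-root labeled node that is not old is young. -/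
def youngNode {α : Type} [LinearOrder α] {k : ℕ}
    (f : α → Option (α × Fin k)) (v : α) : Prop :=
  (∃ y s, f v = some (y, s)) ∧ ¬ oldNode f v

/-- `oleaf`: the number of old labeled leaves. -/
noncomputable def oleafStat {α : Type} [LinearOrder α] [Fintype α] {k : ℕ}
    (f : α → Option (α × Fin k)) : ℕ :=
  (Finset.univ.filter fun v => oldNode f v ∧ ¬ hasChild f v).card

/-- `oint`: the number of old internal labeled nodes. -/
noncomputable def ointStat {α : Type} [LinearOrder α] [Fintype α] {k : ℕ}
    (f : α → Option (α × Fin k)) : ℕ :=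
  (Finset.univ.filter fun v => oldNode f v ∧ hasChild f v).card

/-- `F` has no young leaves. -/
def NoYoungLeaf {α : Type} [LinearOrder α] {k : ℕ}
    (f : α → Option (α × Fin k)) : Prop :=
  ∀ v : α, ¬ (youngNode f v ∧ ¬ hasChild f v)

/-- The generalized Foata–Strehl transformation `Φ_v`.  If `v` is an old internal node
with grand parent `u`, the subtrees hanging from the `k` children of `v` are transferred
(slotwise) to the corresponding children of `u`, turning `v` into a leaf; if `v` is a
young leaf, all subtrees hanging from the children of `u` whose root labels exceed `v`
are transferred (slotwise) to `k` freshly attached children of `v`; otherwise nothing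
happens. -/
noncomputable def phi {α : Type} [LinearOrder α] {k : ℕ} (v : α)
    (f : α → Option (α × Fin k)) : α → Option (α × Fin k) :=
  match f v with
  | none => f
  | some (u, _) =>
    if ∀ x : α, (∃ t, f x = some (u, t)) → x ≤ v then
      -- `v` is old
      if hasChild f v then
        (fun x => match f x with
          | some (w, j) => if w = v then some (u, j) else some (w, j)
          | none => none)
      else f
    else
      -- `v` is young
      if hasChild f v then f
      else
        (fun x => match f x with
          | some (w, j) => if w = u ∧ v < x then some (v, j) else some (w, j)
          | none => none)

/-- `u` is a removable old leaf of the forest `f`: an old leaf that is a grand child of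
the root `r` of its component, the only leaf among the grand children of `r`, the first
`k-1` children of `r` are leaves, and the label of `u` is smaller than the label of
every later root. -/
def removableOldLeaf {α : Type} [LinearOrder α] {k : ℕ}
    (f : α → Option (α × Fin k)) (u : α) : Prop :=
  oldNode f u ∧ ¬ hasChild f u ∧
  ∃ (r : α) (s : Fin k), f u = some (r, s) ∧ f r = none ∧
    (∀ x : α, (∃ t, f x = some (r, t)) → x ≠ u → hasChild f x) ∧
    (∀ (x : α) (j : Fin k), (j : ℕ) < k - 1 → f x ≠ some (r, j)) ∧
    (∀ r' : α, f r' = none → r < r' → u < r')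

/-- `u` is a removable young leaf of the forest `f`: a young leaf that is a grand child
of the root `r` of the rightmost component such that after applying `Φ_u` the first
`k-1` children of `r` are leaves. -/
noncomputable def removableYoungLeaf {α : Type} [LinearOrder α] {k : ℕ}
    (f : α → Option (α × Fin k)) (u : α) : Prop :=
  youngNode f u ∧ ¬ hasChild f u ∧
  ∃ (r : α) (s : Fin k), f u = some (r, s) ∧ f r = none ∧
    (∀ r' : α, f r' = none → r' ≤ r) ∧
    (∀ (x : α) (j : Fin k), (j : ℕ) < k - 1 → phi u f x ≠ some (r, j))

/-- The forest lies in the class `\overline{𝓕}_n(k)`: the rightmost tree is a singleton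
or the first `k-1` children of its root are leaves. -/
def inBarClass {α : Type} [LinearOrder α] {k : ℕ}
    (f : α → Option (α × Fin k)) : Prop :=
  ∃ r : α, f r = none ∧ (∀ r' : α, f r' = none → r' ≤ r) ∧
    (¬ hasChild f r ∨
      ∀ (x : α) (j : Fin k), (j : ℕ) < k - 1 → f x ≠ some (r, j))

/-- The forest lies in the class `\widehat{𝓕}_n(k)`: the rightmost tree is neither a
singleton nor has its first `k-1` root-children all leaves. -/
def inHatClass {α : Type} [LinearOrder α] {k : ℕ}
    (f : α → Option (α × Fin k)) : Prop :=
  ∃ r : α, f r = none ∧ (∀ r' : α, f r' = none → r' ≤ r) ∧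
    hasChild f r ∧ ∃ (x : α) (j : Fin k), (j : ℕ) < k - 1 ∧ f x = some (r, j)

/-- Number of excedances of a permutation of `{1,…,n}`. -/
def excStat {n : ℕ} (σ : Equiv.Perm (Fin n)) : ℕ :=
  (Finset.univ.filter fun i : Fin n => (i : ℕ) < (σ i : ℕ)).card

/-- Number of cycles (including fixed points) in the disjoint cycle decomposition. -/
def cycStat {n : ℕ} (σ : Equiv.Perm (Fin n)) : ℕ :=
  σ.cycleType.card + (Finset.univ.filter fun i => σ i = i).card

/-- `A_n^{(k)}(x) = Σ_{π ∈ S_n} x^{exc π} k^{n - cyc π}`, the `1/k`-Eulerian polynomial. -/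
def Apoly (k n : ℕ) : Polynomial ℝ :=
  ∑ σ : Equiv.Perm (Fin n), X ^ excStat σ * (C (k : ℝ)) ^ (n - cycStat σ)

/-! ### Insertion of a new largest node -/

/-- Extend a forest by a new largest node with attachment `c`. -/
def fext {n k : ℕ} (f : Fin n → Option (Fin n × Fin k)) (c : Option (Fin n × Fin k)) :
    Fin (n + 1) → Option (Fin (n + 1) × Fin k) :=
  Fin.lastCases (motive := fun _ => Option (Fin (n + 1) × Fin k))
    (c.map fun p => (p.1.castSucc, p.2))
    (fun x => (f x).map fun p => (p.1.castSucc, p.2))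

section Transitions

variable {n k : ℕ} (f : Fin n → Option (Fin n × Fin k)) (c : Option (Fin n × Fin k))

lemma fext_cast (x : Fin n) :
    fext f c x.castSucc = (f x).map fun p => (p.1.castSucc, p.2) := by
  simp [fext]

lemma fext_last : fext f c (Fin.last n) = c.map fun p => (p.1.castSucc, p.2) := by
  simp [fext]

lemma map_eq_some_cast (o : Option (Fin n × Fin k)) (y : Fin n) (s : Fin k) :
    (o.map (fun p => (p.1.castSucc, p.2)) = some (y.castSucc, s)) ↔ o = some (y, s) := by
  rcases o with _ | ⟨a, b⟩ <;> simp

lemma map_eq_some_last (o : Option (Fin n × Fin k)) (s : Fin k) :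
    ¬ (o.map (fun p => (p.1.castSucc, p.2)) = some (Fin.last n, s)) := by
  rcases o with _ | ⟨a, b⟩
  · simp
  · simp [Fin.castSucc_ne_last]

lemma fext_cast_some (x y : Fin n) (s : Fin k) :
    fext f c x.castSucc = some (y.castSucc, s) ↔ f x = some (y, s) := by
  rw [fext_cast, map_eq_some_cast]

lemma fext_cast_some_last (x : Fin n) (s : Fin k) :
    ¬ fext f c x.castSucc = some (Fin.last n, s) := by
  rw [fext_cast]; exact map_eq_some_last _ _

lemma fext_last_some (y : Fin n) (s : Fin k) :
    fext f c (Fin.last n) = some (y.castSucc, s) ↔ c = some (y, s) := by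
  rw [fext_last, map_eq_some_cast]

lemma fext_last_some_last (s : Fin k) :
    ¬ fext f c (Fin.last n) = some (Fin.last n, s) := by
  rw [fext_last]; exact map_eq_some_last _ _

lemma fext_cast_none (x : Fin n) : fext f c x.castSucc = none ↔ f x = none := by
  rw [fext_cast]; simp

lemma fext_last_none : fext f c (Fin.last n) = none ↔ c = none := by
  rw [fext_last]; simp

/-- last root -/
def LR {n k : ℕ} (f : Fin n → Option (Fin n × Fin k)) (z : Fin n) : Prop :=
  f z = none ∧ ∀ r', f r' = none → r' ≤ z

/-- all children in the last slot -/
def AL {n k : ℕ} (f : Fin n → Option (Fin n × Fin k)) (z : Fin n) : Prop :=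
  ∀ (x : Fin n) (j : Fin k), (j : ℕ) < k - 1 → f x ≠ some (z, j)

/-- `v` is the old child of `z` -/
def OC {n k : ℕ} (f : Fin n → Option (Fin n × Fin k)) (z v : Fin n) : Prop :=
  (∃ s, f v = some (z, s)) ∧ ∀ x, (∃ t, f x = some (z, t)) → x ≤ v

/-- the old child is a leaf -/
def OCL {n k : ℕ} (f : Fin n → Option (Fin n × Fin k)) (z : Fin n) : Prop :=
  ∃ v, OC f z v ∧ ¬ hasChild f v

/-- the old child is smaller than all later roots -/
def DG {n k : ℕ} (f : Fin n → Option (Fin n × Fin k)) (z : Fin n) : Prop :=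
  ∃ v, OC f z v ∧ ∀ r', f r' = none → z < r' → v < r'

lemma OC_unique {z v v' : Fin n} (h : OC f z v) (h' : OC f z v') : v = v' :=
  le_antisymm (h'.2 _ h.1) (h.2 _ h'.1)

lemma OC_parent {z z' v : Fin n} (h : OC f z v) (h' : OC f z' v) : z = z' := by
  obtain ⟨⟨s, hs⟩, _⟩ := h
  obtain ⟨⟨t, ht⟩, _⟩ := h'
  rw [hs] at ht
  simp at ht
  exact ht.1

lemma oldNode_iff (v : Fin n) : oldNode f v ↔ ∃ z, OC f z v := by
  constructor
  · rintro ⟨y, s, h1, h2⟩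
    exact ⟨y, ⟨s, h1⟩, h2⟩
  · rintro ⟨y, ⟨s, h1⟩, h2⟩
    exact ⟨y, s, h1, h2⟩

lemma exists_OC {z : Fin n} (h : hasChild f z) : ∃ v, OC f z v := by
  let S := Finset.univ.filter fun x => ∃ t, f x = some (z, t)
  have hS : S.Nonempty := by
    obtain ⟨x, s, hx⟩ := h
    exact ⟨x, by simp [S]; exact ⟨s, hx⟩⟩
  refine ⟨S.max' hS, ?_, ?_⟩
  · have := S.max'_mem hS
    simpa [S] using this
  · intro x hx
    apply S.le_max'
    simpa [S] using hx

lemma hasChild_ext_cast (z : Fin n) :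
    hasChild (fext f c) z.castSucc ↔ hasChild f z ∨ ∃ s, c = some (z, s) := by
  unfold hasChild
  rw [Fin.exists_fin_succ']
  simp only [fext_cast_some, fext_last_some]

lemma hasChild_ext_last : ¬ hasChild (fext f c) (Fin.last n) := by
  unfold hasChild
  rw [Fin.exists_fin_succ']
  simp only [fext_cast_some_last, fext_last_some_last]
  simp

lemma LR_ext_some_cast (p : Fin n × Fin k) (z : Fin n) :
    LR (fext f (some p)) z.castSucc ↔ LR f z := by
  unfold LR
  rw [Fin.forall_fin_succ']
  simp only [fext_cast_none, fext_last_none, Fin.castSucc_le_castSucc_iff]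
  simp

lemma LR_ext_some_last (p : Fin n × Fin k) : ¬ LR (fext f (some p)) (Fin.last n) := by
  unfold LR
  simp [fext_last_none]

lemma LR_ext_none_cast (z : Fin n) : ¬ LR (fext f none) z.castSucc := by
  unfold LR
  rw [Fin.forall_fin_succ']
  simp only [fext_cast_none, fext_last_none]
  rintro ⟨_, _, h⟩
  exact absurd (h trivial) (not_le.2 (Fin.castSucc_lt_last z))

lemma LR_ext_none_last : LR (fext f none) (Fin.last n) := by
  unfold LR
  simp [fext_last_none, Fin.le_last]

lemma AL_ext_cast (z : Fin n) :
    AL (fext f c) z.castSucc ↔ AL f z ∧ ∀ j : Fin k, (j : ℕ) < k - 1 → c ≠ some (z, j) := by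
  unfold AL
  rw [Fin.forall_fin_succ']
  simp only [ne_eq, fext_cast_some, fext_last_some]

lemma AL_ext_last : AL (fext f c) (Fin.last n) := by
  unfold AL
  rw [Fin.forall_fin_succ']
  simp only [ne_eq, fext_cast_some_last, fext_last_some_last]
  simp

lemma OC_ext_cast_cast (z v : Fin n) :
    OC (fext f c) z.castSucc v.castSucc ↔ OC f z v ∧ ∀ s, c ≠ some (z, s) := by
  unfold OC
  rw [Fin.forall_fin_succ']
  simp only [fext_cast_some, fext_last_some, Fin.castSucc_le_castSucc_iff]
  have h := not_le.2 (Fin.castSucc_lt_last v)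
  simp only [h, imp_false, not_exists]
  tauto

lemma OC_ext_cast_last (z : Fin n) :
    OC (fext f c) z.castSucc (Fin.last n) ↔ ∃ s, c = some (z, s) := by
  unfold OC
  simp only [fext_last_some, Fin.le_last]
  simp

lemma OC_ext_last (v : Fin (n + 1)) : ¬ OC (fext f c) (Fin.last n) v := by
  rintro ⟨⟨s, hs⟩, -⟩
  exact hasChild_ext_last f c ⟨v, s, hs⟩

lemma old_ext_cast (v : Fin n) :
    oldNode (fext f c) v.castSucc ↔ oldNode f v ∧ ∀ z, OC f z v → ∀ s, c ≠ some (z, s) := by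
  rw [oldNode_iff, oldNode_iff, Fin.exists_fin_succ']
  simp only [OC_ext_cast_cast, OC_ext_last, or_false]
  constructor
  · rintro ⟨z, h1, h2⟩
    exact ⟨⟨z, h1⟩, fun z' hz' => OC_parent f h1 hz' ▸ h2⟩
  · rintro ⟨⟨z, h1⟩, h2⟩
    exact ⟨z, h1, h2 z h1⟩

lemma old_ext_some_last (p : Fin n × Fin k) : oldNode (fext f (some p)) (Fin.last n) := by
  rw [oldNode_iff]
  exact ⟨p.1.castSucc, (OC_ext_cast_last f _ _).2 ⟨p.2, rfl⟩⟩

lemma OCL_ext_cast (z : Fin n) :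
    OCL (fext f c) z.castSucc ↔
      (∃ s, c = some (z, s)) ∨ ∃ v, OC f z v ∧ ¬ hasChild f v ∧ ∀ s, c ≠ some (v, s) := by
  unfold OCL
  rw [Fin.exists_fin_succ']
  simp only [OC_ext_cast_cast, OC_ext_cast_last, hasChild_ext_cast, hasChild_ext_last]
  by_cases h : ∃ s, c = some (z, s)
  · simp [h]
  · simp only [h]
    push Not at h
    simp [h]

lemma DG_ext_none_cast (z : Fin n) : DG (fext f none) z.castSucc ↔ hasChild f z ∧ DG f z := by
  unfold DG
  rw [Fin.exists_fin_succ']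
  simp only [OC_ext_cast_cast, OC_ext_cast_last, Fin.forall_fin_succ', fext_cast_none,
    fext_last_none, Fin.castSucc_lt_castSucc_iff]
  simp [Fin.castSucc_lt_last]
  intro v hv _
  obtain ⟨s, hs⟩ := hv.1
  exact ⟨v, s, hs⟩

lemma DG_ext_some_cast (p : Fin n × Fin k) (z : Fin n) (hz : f z = none) :
    DG (fext f (some p)) z.castSucc ↔ if p.1 = z then LR f z else DG f z := by
  obtain ⟨y, s⟩ := p
  unfold DG
  rw [Fin.exists_fin_succ']
  simp only [OC_ext_cast_cast, OC_ext_cast_last, Fin.forall_fin_succ', fext_cast_none,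
    fext_last_none, Fin.castSucc_lt_castSucc_iff]
  split_ifs with h
  · subst h
    have hl : ∀ r : Fin n, ¬ Fin.last n < r.castSucc := fun r =>
      not_lt.2 (Fin.castSucc_lt_last r).le
    simp [LR, hz, hl]
  · have h' : ¬ (y = z) := h
    simp [h']

end Transitions

/-! ### Node weights -/

/-- Coefficient ring: polynomials in `b` over polynomials in `x`. -/
abbrev PP := Polynomial (Polynomial ℝ)

def pb : PP := X
def pE : PP := X + 1 + C X
def pa : PP := (X + 1) * (X + C X)
def pc : PP := X * (X + 1 + C X)

/-- the weight of a node -/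
def om {n k : ℕ} (f : Fin n → Option (Fin n × Fin k)) (z : Fin n) : PP :=
  if hasChild f z then
    (if OCL f z then
      (if f z = none ∧ AL f z ∧ DG f z then (if LR f z then pb else pc) else pa)
    else (if LR f z ∧ AL f z then 1 else pE))
  else
    (if f z = none then (if LR f z then 1 else pE) else if oldNode f z then 1 else pb)

/-- the weight of a forest -/
def wt {n k : ℕ} (f : Fin n → Option (Fin n × Fin k)) : PP := ∏ z, om f z

/-- the derivation -/
def DD (k : ℕ) (p : PP) : PP := (k : PP) * pa * derivative p

section Weights

variable {n k : ℕ} (f : Fin n → Option (Fin n × Fin k))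

lemma OCL_hasChild {z : Fin n} (h : OCL f z) : hasChild f z := by
  obtain ⟨v, ⟨⟨s, hs⟩, _⟩, _⟩ := h
  exact ⟨v, s, hs⟩

lemma AL_of_leaf {z : Fin n} (h : ¬ hasChild f z) : AL f z := by
  intro x j _ hx
  exact h ⟨x, j, hx⟩

lemma DG_of_LR {z : Fin n} (h : LR f z) (h' : hasChild f z) : DG f z := by
  obtain ⟨v, hv⟩ := exists_OC f h'
  exact ⟨v, hv, fun r hr hz => absurd (h.2 r hr) (not_le.2 hz)⟩

lemma OC_ne (hf : IsForest f) {z v : Fin n} (h : OC f z v) : z < v := by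
  obtain ⟨⟨s, hs⟩, _⟩ := h
  exact hf _ _ _ hs

lemma om_ext_self (y : Fin n) (s : Fin k) :
    om (fext f (some (y, s))) y.castSucc =
      if LR f y ∧ AL f y ∧ ¬ ((s : ℕ) < k - 1) then pb else pa := by
  unfold om
  have h1 : hasChild (fext f (some (y, s))) y.castSucc :=
    (hasChild_ext_cast f _ _).2 (Or.inr ⟨s, rfl⟩)
  have h2 : OCL (fext f (some (y, s))) y.castSucc :=
    (OCL_ext_cast f _ _).2 (Or.inl ⟨s, rfl⟩)
  rw [if_pos h1, if_pos h2]
  simp only [fext_cast_none, AL_ext_cast, LR_ext_some_cast]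
  by_cases h3 : f y = none
  · simp only [DG_ext_some_cast _ _ _ h3]
    have : (∀ j : Fin k, (j : ℕ) < k - 1 → some (y, s) ≠ some (y, j)) ↔ ¬ ((s : ℕ) < k - 1) := by
      constructor
      · intro h hs
        exact h s hs rfl
      · intro h j hj he
        simp at he
        exact h (he ▸ hj)
    simp only [this]
    by_cases h4 : LR f y <;> simp [h3, h4]
  · have h4 : ¬ LR f y := fun h => h3 h.1
    simp [h3, h4]

lemma om_ext_other (y z : Fin n) (s : Fin k) (hzy : z ≠ y) :
    om (fext f (some (y, s))) z.castSucc =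
      if OC f z y ∧ ¬ hasChild f y then (if LR f z ∧ AL f z then 1 else pE)
      else if OC f y z ∧ ¬ hasChild f z then pb else om f z := by
  have hne : ∀ t, ¬ (some (y, s) = some (z, t)) := by
    intro t h
    simp at h
    exact hzy h.1.symm
  have hc : hasChild (fext f (some (y, s))) z.castSucc ↔ hasChild f z := by
    rw [hasChild_ext_cast]
    simp only [hne]
    simp
  have hA : AL (fext f (some (y, s))) z.castSucc ↔ AL f z := by
    rw [AL_ext_cast]
    simp only [ne_eq, hne]
    simp
  have hO : OCL (fext f (some (y, s))) z.castSucc ↔ ∃ v, OC f z v ∧ ¬ hasChild f v ∧ v ≠ y := by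
    rw [OCL_ext_cast]
    simp only [hne]
    simp [eq_comm]
  have hD : f z = none → (DG (fext f (some (y, s))) z.castSucc ↔ DG f z) := by
    intro h
    rw [DG_ext_some_cast _ _ _ h]
    have : ¬ ((y, s).1 = z) := fun h => hzy h.symm
    simp only [this, if_false]
  have hold : oldNode (fext f (some (y, s))) z.castSucc ↔ oldNode f z ∧ ¬ OC f y z := by
    rw [old_ext_cast]
    constructor
    · rintro ⟨h1, h2⟩
      exact ⟨h1, fun h => h2 y h s rfl⟩
    · rintro ⟨h1, h2⟩
      refine ⟨h1, fun z' hz' t ht => ?_⟩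
      simp at ht
      exact h2 (ht.1 ▸ hz')
  have hcond : (fext f (some (y, s)) z.castSucc = none ∧ AL (fext f (some (y, s))) z.castSucc ∧
      DG (fext f (some (y, s))) z.castSucc) ↔ (f z = none ∧ AL f z ∧ DG f z) := by
    rw [fext_cast_none, hA]
    constructor
    · rintro ⟨h1, h2, h3⟩
      exact ⟨h1, h2, (hD h1).1 h3⟩
    · rintro ⟨h1, h2, h3⟩
      exact ⟨h1, h2, (hD h1).2 h3⟩
  unfold om
  simp only [hcond]
  simp only [hc, hA, hO, hold, LR_ext_some_cast, fext_cast_none]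
  by_cases hz : hasChild f z
  · simp only [hz, if_true, not_true, and_false, if_false]
    by_cases h1 : OC f z y ∧ ¬ hasChild f y
    · have : ¬ ∃ v, OC f z v ∧ ¬ hasChild f v ∧ v ≠ y := by
        rintro ⟨v, hv, _, hvy⟩
        exact hvy (OC_unique f hv h1.1)
      rw [if_pos h1, if_neg this]
    · have : (∃ v, OC f z v ∧ ¬ hasChild f v ∧ v ≠ y) ↔ OCL f z := by
        constructor
        · rintro ⟨v, hv, h, _⟩
          exact ⟨v, hv, h⟩
        · rintro ⟨v, hv, h⟩
          refine ⟨v, hv, h, ?_⟩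
          rintro rfl
          exact h1 ⟨hv, h⟩
      rw [if_neg h1]
      simp only [this]
  · have h0 : ¬ OC f z y := by
      rintro ⟨⟨t, ht⟩, _⟩
      exact hz ⟨y, t, ht⟩
    simp only [hz, h0, if_false, false_and, not_false_eq_true, and_true]
    by_cases h1 : OC f y z
    · have h2 : f z ≠ none := by
        obtain ⟨⟨t, ht⟩, _⟩ := h1
        rw [ht]; simp
      simp [h1, h2]
    · simp [h1]

lemma om_ext_last_some (p : Fin n × Fin k) : om (fext f (some p)) (Fin.last n) = 1 := by
  unfold om
  rw [if_neg (hasChild_ext_last f _), if_neg (by rw [fext_last_none]; simp),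
    if_pos (old_ext_some_last f p)]

lemma om_ext_last_none : om (fext f none) (Fin.last n) = 1 := by
  unfold om
  rw [if_neg (hasChild_ext_last f _), if_pos (by rw [fext_last_none]),
    if_pos (LR_ext_none_last f)]

lemma om_ext_none_cast (z : Fin n) :
    om (fext f none) z.castSucc = if LR f z ∧ AL f z then pE * om f z else om f z := by
  have hc : hasChild (fext f none) z.castSucc ↔ hasChild f z := by
    rw [hasChild_ext_cast]; simp
  have hA : AL (fext f none) z.castSucc ↔ AL f z := by
    rw [AL_ext_cast]; simp
  have hO : OCL (fext f none) z.castSucc ↔ OCL f z := by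
    rw [OCL_ext_cast]; simp [OCL]
  have hold : oldNode (fext f none) z.castSucc ↔ oldNode f z := by
    rw [old_ext_cast]; simp
  have hL : ¬ LR (fext f none) z.castSucc := LR_ext_none_cast f z
  unfold om
  simp only [hc, hA, hO, hold, hL, fext_cast_none, DG_ext_none_cast, if_false, false_and]
  by_cases h1 : hasChild f z
  · by_cases h3 : LR f z
    · have h4 := DG_of_LR f h3 h1
      by_cases h5 : AL f z <;> by_cases h6 : OCL f z <;>
        simp [h1, h3, h4, h5, h6, h3.1, pE, pb, pc, mul_comm]
    · simp [h1, h3]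
  · have h5 := AL_of_leaf f h1
    by_cases h3 : LR f z
    · simp [h1, h3, h5, h3.1]
    · simp [h1, h3]

lemma prod_erase_mul (z : Fin n) : om f z * ∏ v ∈ Finset.univ.erase z, om f v = wt f := by
  unfold wt
  exact Finset.mul_prod_erase _ _ (Finset.mem_univ z)

lemma om_oldleaf {y : Fin n} (h1 : oldNode f y) (h2 : ¬ hasChild f y) : om f y = 1 := by
  have h0 : f y ≠ none := by
    obtain ⟨z, s, h, _⟩ := h1
    rw [h]; simp
  simp [om, h0, h1, h2]

/-- product when two factors change -/
lemma prod_two (g h : Fin n → PP) (y v : Fin n) (hyv : v ≠ y) (hv : h v = 1)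
    (hgh : ∀ z, z ≠ y → z ≠ v → g z = h z) :
    ∏ z, g z = g y * g v * ∏ z ∈ Finset.univ.erase y, h z := by
  rw [← Finset.mul_prod_erase _ g (Finset.mem_univ y)]
  have hm : v ∈ Finset.univ.erase y := by simp [hyv]
  rw [← Finset.mul_prod_erase _ g hm, ← Finset.mul_prod_erase _ h hm, hv]
  have : ∏ x ∈ (Finset.univ.erase y).erase v, g x = ∏ x ∈ (Finset.univ.erase y).erase v, h x := by
    apply Finset.prod_congr rfl
    intro x hx
    simp at hx
    exact hgh x hx.2 hx.1
  rw [this]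
  ring

lemma wt_ext_some (p : Fin n × Fin k) :
    wt (fext f (some p)) = ∏ z : Fin n, om (fext f (some p)) z.castSucc := by
  unfold wt
  rw [Fin.prod_univ_castSucc, om_ext_last_some, mul_one]

lemma wt_ext_none :
    wt (fext f none) = ∏ z : Fin n, om (fext f none) z.castSucc := by
  unfold wt
  rw [Fin.prod_univ_castSucc, om_ext_last_none, mul_one]

lemma wt_insert_notold (hf : IsForest f) (y : Fin n) (s : Fin k)
    (hy : ¬ (oldNode f y ∧ ¬ hasChild f y)) :
    wt (fext f (some (y, s))) =
      (if LR f y ∧ AL f y ∧ ¬ ((s : ℕ) < k - 1) then pb else pa) * (if OCL f y then pb else 1) *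
        ∏ z ∈ Finset.univ.erase y, om f z := by
  rw [wt_ext_some]
  have hno : ∀ z, ¬ (OC f z y ∧ ¬ hasChild f y) := by
    rintro z ⟨h1, h2⟩
    exact hy ⟨(oldNode_iff f y).2 ⟨z, h1⟩, h2⟩
  by_cases hO : OCL f y
  · obtain ⟨v, hv, hvl⟩ := hO
    have hlt := OC_ne f hf hv
    rw [prod_two _ (om f) y v hlt.ne' (om_oldleaf f ((oldNode_iff f v).2 ⟨y, hv⟩) hvl)]
    · have hO' : OCL f y := ⟨v, hv, hvl⟩
      have hp : OC f y v ∧ ¬ hasChild f v := ⟨hv, hvl⟩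
      rw [om_ext_self, om_ext_other _ _ _ _ hlt.ne', if_neg (hno v)]
      simp only [hp, hO', not_false_eq_true, and_self, if_true]
    · intro z hz hzv
      rw [om_ext_other _ _ _ _ hz, if_neg (hno z), if_neg]
      rintro ⟨h1, h2⟩
      exact hzv (OC_unique f h1 hv)
  · rw [if_neg hO, mul_one, ← Finset.mul_prod_erase _ _ (Finset.mem_univ y), om_ext_self]
    congr 1
    apply Finset.prod_congr rfl
    intro z hz
    simp at hz
    rw [om_ext_other _ _ _ _ hz, if_neg (hno z), if_neg]
    rintro ⟨h1, h2⟩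
    exact hO ⟨z, h1, h2⟩

lemma wt_insert_old (hf : IsForest f) (p y : Fin n) (s : Fin k)
    (h1 : OC f p y) (h2 : ¬ hasChild f y) :
    wt (fext f (some (y, s))) =
      (if LR f p ∧ AL f p then 1 else pE) * pa * ∏ z ∈ Finset.univ.erase p, om f z := by
  rw [wt_ext_some]
  have hlt := OC_ne f hf h1
  rw [prod_two _ (om f) p y hlt.ne' (om_oldleaf f ((oldNode_iff f y).2 ⟨p, h1⟩) h2)]
  · have hn : ¬ LR f y := by
      intro h3
      obtain ⟨⟨t, ht⟩, _⟩ := h1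
      rw [h3.1] at ht
      simp at ht
    have hp : OC f p y ∧ ¬ hasChild f y := ⟨h1, h2⟩
    rw [om_ext_self, om_ext_other _ _ _ _ hlt.ne, if_pos hp]
    simp only [hn, false_and, if_false]
  · intro z hz hzy
    rw [om_ext_other _ _ _ _ hzy, if_neg, if_neg]
    · rintro ⟨h3, _⟩
      obtain ⟨⟨t, ht⟩, _⟩ := h3
      exact h2 ⟨z, t, ht⟩
    · rintro ⟨h3, _⟩
      exact hz (OC_parent f h3 h1)

lemma der_om (y : Fin n) :
    derivative (om f y) =
      (if LR f y ∧ AL f y then 0 else if oldNode f y ∧ ¬ hasChild f y then 0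
        else if OCL f y then pb else 1) +
      (if OCL f y then (if LR f y ∧ AL f y then 1 else pE) else 0) := by
  have ha : derivative pa = pb + pE := by
    simp [pa, pb, pE]; ring
  have hc : derivative pc = pb + pE := by
    simp [pc, pb, pE]; ring
  have hb : derivative pb = 1 := by simp [pb]
  have hE : derivative pE = 1 := by simp [pE]
  unfold om
  by_cases h1 : hasChild f y
  · by_cases h2 : OCL f y
    · by_cases h3 : LR f y
      · have h4 := DG_of_LR f h3 h1
        by_cases h5 : AL f y <;> simp [h1, h2, h3, h4, h5, h3.1, ha, hb]
      · by_cases h4 : f y = none ∧ AL f y ∧ DG f y <;> simp [h1, h2, h3, h4, ha, hc]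
    · by_cases h3 : LR f y ∧ AL f y <;> simp [h1, h2, h3, hE]
  · have h2 : ¬ OCL f y := fun h => h1 (OCL_hasChild f h)
    have h5 := AL_of_leaf f h1
    by_cases h6 : f y = none
    · have h7 : ¬ oldNode f y := by
        rintro ⟨z, s, h, _⟩
        rw [h6] at h
        simp at h
      by_cases h3 : LR f y <;> simp [h1, h2, h3, h5, h6, h7, hE]
    · have h3 : ¬ LR f y := fun h => h6 h.1
      by_cases h7 : oldNode f y <;> simp [h1, h2, h3, h6, h7, hb]

lemma sum_core (hf : IsForest f) :
    (∑ y : Fin n, if LR f y ∧ AL f y then 0 else ∑ s : Fin k, wt (fext f (some (y, s)))) =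
      DD k (wt f) := by
  set J : Fin n → PP := fun p =>
    (k : PP) * pa * (if LR f p ∧ AL f p then 1 else pE) * ∏ z ∈ Finset.univ.erase p, om f z with hJ
  have key : ∀ y : Fin n, (if LR f y ∧ AL f y then 0 else ∑ s : Fin k, wt (fext f (some (y, s)))) =
      (k : PP) * pa * (if LR f y ∧ AL f y then 0 else if oldNode f y ∧ ¬ hasChild f y then 0
        else if OCL f y then pb else 1) * (∏ z ∈ Finset.univ.erase y, om f z) +
      ∑ p : Fin n, if OC f p y ∧ ¬ hasChild f y then J p else 0 := by
    intro y
    by_cases hs : LR f y ∧ AL f y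
    · have : ∀ p, ¬ (OC f p y ∧ ¬ hasChild f y) := by
        rintro p ⟨⟨⟨t, ht⟩, _⟩, _⟩
        rw [hs.1.1] at ht
        simp at ht
      simp [hs, this]
    · rw [if_neg hs, if_neg hs]
      by_cases ho : oldNode f y ∧ ¬ hasChild f y
      · rw [if_pos ho]
        obtain ⟨p, hp⟩ := (oldNode_iff f y).1 ho.1
        rw [Finset.sum_eq_single p]
        · rw [if_pos ⟨hp, ho.2⟩]
          simp only [wt_insert_old f hf p y _ hp ho.2, hJ]
          simp
          ring
        · intro q _ hq
          rw [if_neg]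
          rintro ⟨h, _⟩
          exact hq (OC_parent f h hp)
        · simp
      · rw [if_neg ho]
        have h2 : ∀ p, ¬ (OC f p y ∧ ¬ hasChild f y) := by
          rintro p ⟨h1, h2⟩
          exact ho ⟨(oldNode_iff f y).2 ⟨p, h1⟩, h2⟩
        simp only [h2, if_false, Finset.sum_const_zero, add_zero]
        have h3 : ∀ s : Fin k, ¬ (LR f y ∧ AL f y ∧ ¬ ((s : ℕ) < k - 1)) := by
          rintro s ⟨h3, h4, _⟩
          exact hs ⟨h3, h4⟩
        simp only [wt_insert_notold f hf y _ ho, h3, if_false]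
        simp
        ring
  rw [Finset.sum_congr rfl fun y _ => key y, Finset.sum_add_distrib, Finset.sum_comm (γ := Fin n)]
  have h2 : ∀ p : Fin n, (∑ y : Fin n, if OC f p y ∧ ¬ hasChild f y then J p else 0) =
      if OCL f p then J p else 0 := by
    intro p
    by_cases h : OCL f p
    · rw [if_pos h]
      obtain ⟨v, hv, hl⟩ := h
      rw [Finset.sum_eq_single v]
      · rw [if_pos ⟨hv, hl⟩]
      · intro q _ hq
        rw [if_neg]
        rintro ⟨h, _⟩
        exact hq (OC_unique f h hv)
      · simp
    · rw [if_neg h]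
      apply Finset.sum_eq_zero
      intro y _
      rw [if_neg]
      rintro ⟨h1, h2⟩
      exact h ⟨y, h1, h2⟩
  rw [Finset.sum_congr rfl fun p _ => h2 p, ← Finset.sum_add_distrib]
  unfold DD wt
  rw [derivative_prod_finset, Finset.mul_sum]
  apply Finset.sum_congr rfl
  intro y _
  rw [der_om]
  by_cases h : OCL f y
  · simp only [h, if_true, hJ]
    ring
  · simp only [h, if_false]
    ring

lemma om_spec (y : Fin n) (h : LR f y ∧ AL f y) : om f y = if OCL f y then pb else 1 := by
  unfold om
  by_cases h1 : hasChild f y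
  · have h4 := DG_of_LR f h.1 h1
    simp [h1, h4, h, h.1.1]
  · have h2 : ¬ OCL f y := fun h => h1 (OCL_hasChild f h)
    simp [h1, h2, h.1, h.1.1]

lemma wt_insert_spec (hf : IsForest f) (y : Fin n) (s : Fin k) (h : LR f y ∧ AL f y) :
    wt (fext f (some (y, s))) = (if (s : ℕ) < k - 1 then pa else pb) * wt f := by
  rw [wt_insert_notold f hf, ← prod_erase_mul f y, om_spec f y h]
  · by_cases hs : (s : ℕ) < k - 1 <;> simp [h, hs] <;> ring
  · rintro ⟨⟨z, t, h1, _⟩, _⟩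
    rw [h.1.1] at h1
    simp at h1

lemma LR_unique {y z : Fin n} (hy : LR f y) (hz : LR f z) : y = z :=
  le_antisymm (hz.2 _ hy.1) (hy.2 _ hz.1)

lemma wt_none_spec (y : Fin n) (h : LR f y ∧ AL f y) : wt (fext f none) = pE * wt f := by
  rw [wt_ext_none, ← Finset.mul_prod_erase _ _ (Finset.mem_univ y), ← prod_erase_mul f y,
    om_ext_none_cast, if_pos h, mul_assoc]
  congr 2
  apply Finset.prod_congr rfl
  intro z hz
  simp at hz
  rw [om_ext_none_cast, if_neg]
  rintro ⟨h1, _⟩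
  exact hz (LR_unique f h1 h.1)

lemma wt_none_nospec (h : ∀ y, ¬ (LR f y ∧ AL f y)) : wt (fext f none) = wt f := by
  rw [wt_ext_none]
  unfold wt
  apply Finset.prod_congr rfl
  intro z _
  rw [om_ext_none_cast, if_neg (h z)]

end Weights

/-! ### Sums over forests -/

/-- the set of forests -/
def Fst (n k : ℕ) : Finset (Fin n → Option (Fin n × Fin k)) :=
  Finset.univ.filter fun f => IsForest f

/-- bar class -/
def BarC {n k : ℕ} (f : Fin n → Option (Fin n × Fin k)) : Prop := ∃ r, LR f r ∧ AL f r

/-- sum of the weights over the bar class -/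
def SU (k n : ℕ) : PP := ∑ f ∈ Fst n k, if BarC f then wt f else 0

/-- sum of the weights over the hat class -/
def SV (k n : ℕ) : PP := ∑ f ∈ Fst n k, if BarC f then 0 else wt f

lemma IsForest_ext {n k : ℕ} (f : Fin n → Option (Fin n × Fin k)) (c : Option (Fin n × Fin k)) :
    IsForest (fext f c) ↔ IsForest f := by
  unfold IsForest
  constructor
  · intro h x y s hx
    have := h x.castSucc y.castSucc s ((fext_cast_some f c x y s).2 hx)
    exact Fin.castSucc_lt_castSucc_iff.1 this
  · intro h x y s hx
    induction x using Fin.lastCases with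
    | last =>
      induction y using Fin.lastCases with
      | last => exact absurd hx (fext_last_some_last f c s)
      | cast y => exact Fin.castSucc_lt_last y
    | cast x =>
      induction y using Fin.lastCases with
      | last => exact absurd hx (fext_cast_some_last f c x s)
      | cast y => exact Fin.castSucc_lt_castSucc_iff.2 (h x y s ((fext_cast_some f c x y s).1 hx))

lemma map_cast_inj {n k : ℕ} {o o' : Option (Fin n × Fin k)}
    (h : (o.map fun p => (p.1.castSucc, p.2)) = o'.map fun p => (p.1.castSucc, p.2)) : o = o' := by
  rcases o with _ | ⟨a, b⟩ <;> rcases o' with _ | ⟨a', b'⟩ <;> simp_all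

lemma fext_inj {n k : ℕ} {f f' : Fin n → Option (Fin n × Fin k)} {c c' : Option (Fin n × Fin k)}
    (h : fext f c = fext f' c') : f = f' ∧ c = c' := by
  constructor
  · funext x
    have := congrFun h x.castSucc
    rw [fext_cast, fext_cast] at this
    exact map_cast_inj this
  · have := congrFun h (Fin.last n)
    rw [fext_last, fext_last] at this
    exact map_cast_inj this

lemma exists_map_cast {n k : ℕ} (o : Option (Fin (n + 1) × Fin k))
    (h : ∀ s, o ≠ some (Fin.last n, s)) :
    ∃ o' : Option (Fin n × Fin k), (o'.map fun p => (p.1.castSucc, p.2)) = o := by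
  rcases o with _ | ⟨a, b⟩
  · exact ⟨none, rfl⟩
  · induction a using Fin.lastCases with
    | last => exact absurd rfl (h b)
    | cast a => exact ⟨some (a, b), rfl⟩

lemma exists_fext {n k : ℕ} (g : Fin (n + 1) → Option (Fin (n + 1) × Fin k)) (hg : IsForest g) :
    ∃ f c, fext f c = g := by
  have key : ∀ x s, g x ≠ some (Fin.last n, s) := fun x s h =>
    absurd (hg _ _ _ h) (not_lt.2 (Fin.le_last x))
  choose f hf using fun x : Fin n => exists_map_cast (g x.castSucc) (key _)
  obtain ⟨c, hc⟩ := exists_map_cast (g (Fin.last n)) (key _)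
  refine ⟨f, c, ?_⟩
  funext x
  induction x using Fin.lastCases with
  | last => rw [fext_last, hc]
  | cast x => rw [fext_cast, hf]

lemma sum_forest {n k : ℕ} {M : Type*} [AddCommMonoid M]
    (g : (Fin (n + 1) → Option (Fin (n + 1) × Fin k)) → M) :
    ∑ h ∈ Fst (n + 1) k, g h = ∑ f ∈ Fst n k, ∑ c, g (fext f c) := by
  rw [← Finset.sum_product']
  symm
  refine Finset.sum_nbij (fun p => fext p.1 p.2) ?_ ?_ ?_ ?_
  · rintro ⟨f, c⟩ h
    simp only [Fst, Finset.mem_product, Finset.mem_filter, Finset.mem_univ, true_and, and_true]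
      at h ⊢
    exact (IsForest_ext f c).2 h
  · rintro ⟨f, c⟩ - ⟨f', c'⟩ - h
    obtain ⟨h1, h2⟩ := fext_inj h
    exact Prod.ext h1 h2
  · intro g hg
    simp only [Fst, Finset.coe_filter, Finset.mem_univ, true_and, Set.mem_ofPred_eq] at hg
    obtain ⟨f, c, rfl⟩ := exists_fext g hg
    refine ⟨(f, c), ?_, rfl⟩
    simp [Fst, (IsForest_ext f c).1 hg]
  · intros; rfl

lemma bar_none {n k : ℕ} (f : Fin n → Option (Fin n × Fin k)) : BarC (fext f none) :=
  ⟨Fin.last n, LR_ext_none_last f, AL_ext_last f _⟩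

lemma bar_some {n k : ℕ} (f : Fin n → Option (Fin n × Fin k)) (y : Fin n) (s : Fin k) :
    BarC (fext f (some (y, s))) ↔ BarC f ∧ ¬ (LR f y ∧ (s : ℕ) < k - 1) := by
  unfold BarC
  rw [Fin.exists_fin_succ']
  simp only [LR_ext_some_cast, LR_ext_some_last, AL_ext_cast, false_and, or_false]
  constructor
  · rintro ⟨r, h1, h2, h3⟩
    refine ⟨⟨r, h1, h2⟩, ?_⟩
    rintro ⟨h4, h5⟩
    have : r = y := LR_unique f h1 h4
    subst this
    exact h3 s h5 rfl
  · rintro ⟨⟨r, h1, h2⟩, h3⟩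
    refine ⟨r, h1, h2, ?_⟩
    intro j hj h
    simp only [Option.some.injEq, Prod.mk.injEq] at h
    obtain ⟨rfl, rfl⟩ := h
    exact h3 ⟨h1, hj⟩

lemma sum_slots {k : ℕ} (hk : 1 ≤ k) (p q : PP) :
    (∑ s : Fin k, if (s : ℕ) < k - 1 then p else q) = ((k : PP) - 1) * p + q := by
  obtain ⟨m, rfl⟩ : ∃ m, k = m + 1 := ⟨k - 1, by omega⟩
  rw [Fin.sum_univ_castSucc]
  simp

lemma DD_sum {ι : Type*} (k : ℕ) (s : Finset ι) (g : ι → PP) :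
    DD k (∑ i ∈ s, g i) = ∑ i ∈ s, DD k (g i) := by
  simp [DD, Polynomial.derivative_sum, Finset.mul_sum]

lemma DD_zero (k : ℕ) : DD k 0 = 0 := by simp [DD]

lemma step_not_bar {n k : ℕ} (f : Fin n → Option (Fin n × Fin k)) (hf : IsForest f)
    (h : ¬ BarC f) :
    (∑ c, if BarC (fext f c) then wt (fext f c) else 0) = wt f ∧
    (∑ c, if BarC (fext f c) then 0 else wt (fext f c)) = DD k (wt f) := by
  have h' : ∀ y, ¬ (LR f y ∧ AL f y) := fun y hy => h ⟨y, hy⟩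
  rw [Fintype.sum_option, Fintype.sum_option, Fintype.sum_prod_type, Fintype.sum_prod_type]
  simp only [bar_none, if_true, bar_some, h, false_and, if_false]
  constructor
  · simp [wt_none_nospec f h']
  · rw [← sum_core f hf, zero_add]
    refine Finset.sum_congr rfl fun y _ => ?_
    rw [if_neg (h' y)]

lemma step_bar {n k : ℕ} (hk : 1 ≤ k) (f : Fin n → Option (Fin n × Fin k)) (hf : IsForest f)
    (h : BarC f) :
    (∑ c, if BarC (fext f c) then wt (fext f c) else 0) = DD k (wt f) + (pE + pb) * wt f ∧
    (∑ c, if BarC (fext f c) then 0 else wt (fext f c)) = ((k : PP) - 1) * pa * wt f := by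
  obtain ⟨r, hr⟩ := id h
  have hy : ∀ y, (LR f y ∧ AL f y) ↔ y = r := fun y =>
    ⟨fun h => LR_unique f h.1 hr.1, fun h => h ▸ hr⟩
  have hL : ∀ y, LR f y ↔ y = r := fun y =>
    ⟨fun h => LR_unique f h hr.1, fun h => h ▸ hr.1⟩
  rw [Fintype.sum_option, Fintype.sum_option, Fintype.sum_prod_type, Fintype.sum_prod_type]
  simp only [bar_none, if_true, bar_some, h, true_and]
  rw [← sum_core f hf, wt_none_spec f r hr]
  simp only [hy]
  simp only [hL]
  rw [← Finset.add_sum_erase _ _ (Finset.mem_univ r), ← Finset.add_sum_erase _ _ (Finset.mem_univ r),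
    ← Finset.add_sum_erase _ _ (Finset.mem_univ r)]
  simp only [if_true, true_and]
  constructor
  · have e1 : ∑ s : Fin k, (if ¬ (s : ℕ) < k - 1 then wt (fext f (some (r, s))) else 0)
        = pb * wt f := by
      have := sum_slots hk (0 : PP) (pb * wt f)
      rw [mul_zero, zero_add] at this
      rw [← this]
      refine Finset.sum_congr rfl fun s _ => ?_
      rw [wt_insert_spec f hf r s hr]
      by_cases hs : (s : ℕ) < k - 1 <;> simp [hs]
    rw [e1]
    have e2 : ∀ y ∈ Finset.univ.erase r, (∑ s : Fin k, if ¬ (y = r ∧ (s : ℕ) < k - 1) then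
        wt (fext f (some (y, s))) else 0) = if y = r then 0 else
          ∑ s, wt (fext f (some (y, s))) := by
      intro y hy
      have : y ≠ r := Finset.ne_of_mem_erase hy
      simp [this]
    rw [Finset.sum_congr rfl e2]
    ring
  · have e1 : ∑ s : Fin k, (if ¬ (s : ℕ) < k - 1 then 0 else wt (fext f (some (r, s))))
        = ((k : PP) - 1) * (pa * wt f) := by
      have := sum_slots hk (pa * wt f) (0 : PP)
      rw [add_zero] at this
      rw [← this]
      refine Finset.sum_congr rfl fun s _ => ?_
      rw [wt_insert_spec f hf r s hr]
      by_cases hs : (s : ℕ) < k - 1 <;> simp [hs]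
    rw [e1]
    have e2 : ∀ y ∈ Finset.univ.erase r, (∑ s : Fin k, if ¬ (y = r ∧ (s : ℕ) < k - 1) then
        0 else wt (fext f (some (y, s)))) = 0 := by
      intro y hy
      have : y ≠ r := Finset.ne_of_mem_erase hy
      simp [this]
    rw [Finset.sum_congr rfl e2]
    simp [mul_assoc]

lemma mem_Fst {n k : ℕ} {f : Fin n → Option (Fin n × Fin k)} : f ∈ Fst n k ↔ IsForest f := by
  simp [Fst]

lemma SU_succ {k : ℕ} (hk : 1 ≤ k) (n : ℕ) :
    SU k (n + 1) = DD k (SU k n) + (pE + pb) * SU k n + SV k n := by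
  unfold SU SV
  rw [sum_forest, DD_sum, Finset.mul_sum, ← Finset.sum_add_distrib, ← Finset.sum_add_distrib]
  refine Finset.sum_congr rfl fun f hf => ?_
  rw [mem_Fst] at hf
  by_cases h : BarC f
  · rw [(step_bar hk f hf h).1]; simp [h]
  · rw [(step_not_bar f hf h).1]; simp [h, DD_zero]

lemma SV_succ {k : ℕ} (hk : 1 ≤ k) (n : ℕ) :
    SV k (n + 1) = DD k (SV k n) + ((k : PP) - 1) * pa * SU k n := by
  unfold SU SV
  rw [sum_forest, DD_sum, Finset.mul_sum, ← Finset.sum_add_distrib]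
  refine Finset.sum_congr rfl fun f hf => ?_
  rw [mem_Fst] at hf
  by_cases h : BarC f
  · rw [(step_bar hk f hf h).2]; simp [h, DD_zero]
  · rw [(step_not_bar f hf h).2]; simp [h]

lemma not_bar_zero {k : ℕ} (f : Fin 0 → Option (Fin 0 × Fin k)) : ¬ BarC f := by
  rintro ⟨r, _⟩; exact r.elim0

lemma SU_one {k : ℕ} (hk : 1 ≤ k) : SU k 1 = 1 ∧ SV k 1 = 0 := by
  have h0 : SU k 0 = 0 := by simp [SU, not_bar_zero]
  have h1 : SV k 0 = 1 := by
    unfold SV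
    simp only [not_bar_zero, if_false]
    have : Fst 0 k = Finset.univ := by
      ext f; simp only [mem_Fst, Finset.mem_univ, iff_true]; intro x; exact x.elim0
    rw [this]
    simp [wt]
  rw [SU_succ hk, SV_succ hk, h0, h1]
  simp [DD]

/-! ### The γ-coefficients -/

/-- the pair of γ-coefficient arrays (`a`-part and `b`-part) for `n = m + 1` -/
def gam (k : ℕ) : ℕ → (ℕ → ℕ) × (ℕ → ℕ)
  | 0 => (fun i => if i = 0 then 1 else 0, fun _ => 0)
  | m + 1 =>
    (fun i => match i with
      | 0 => (gam k m).1 0 + (gam k m).2 0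
      | j + 1 => (gam k m).1 (j + 1) * (1 + k * (j + 1)) + (gam k m).2 (j + 1) +
          2 * k * (m - 2 * j) * (gam k m).1 j,
     fun i => match i with
      | 0 => 0
      | j + 1 => k * (j + 1) * (gam k m).2 (j + 1) +
          2 * k * (m + 1 - 2 * j) * (gam k m).2 j + (k - 1) * (gam k m).1 j)

lemma gam_support (k m : ℕ) : (∀ i, m < 2 * i → (gam k m).1 i = 0) ∧
    (∀ i, m + 1 < 2 * i → (gam k m).2 i = 0) := by
  induction m with
  | zero =>
    constructor
    · intro i hi
      simp only [gam]
      rw [if_neg (by omega)]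
    · intro i hi; rfl
  | succ m ih =>
    constructor
    · intro i hi
      rcases i with _ | j
      · omega
      · simp only [gam]
        rw [ih.1 _ (by omega), ih.2 _ (by omega), Nat.sub_eq_zero_of_le (by omega : m ≤ 2 * j)]
        simp
    · intro i hi
      rcases i with _ | j
      · omega
      · simp only [gam]
        rw [ih.2 _ (by omega), ih.1 _ (by omega), Nat.sub_eq_zero_of_le (by omega : m + 1 ≤ 2 * j)]
        simp

section General

variable {R : Type*} [CommRing R] (A T : R) (k : ℕ)

/-- γ-expansion of the `a`-part -/
def GU (m : ℕ) : R := ∑ i ∈ Finset.range (m + 2), ((gam k m).1 i : R) * A ^ i * T ^ (m - 2 * i)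

/-- γ-expansion of the `b`-part -/
def GV (m : ℕ) : R := ∑ i ∈ Finset.range (m + 2), ((gam k m).2 i : R) * A ^ i * T ^ (m + 1 - 2 * i)

variable (c : R) (D : R →+ R) (hD : ∀ p q, D (p * q) = p * D q + q * D p)
  (hA : D A = k * A * T - 2 * c * A) (hT : D T = 2 * k * A - c * T)

include hD in
lemma D_one : D 1 = 0 := by
  have := hD 1 1
  simp at this
  exact this

include hD in
lemma D_nat (r : ℕ) : D (r : R) = 0 := by
  have h1 := D_one D hD
  induction r with
  | zero => simp
  | succ r ih => push_cast; rw [map_add, ih, h1, add_zero]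

include hD in
lemma D_pow (p : R) (i : ℕ) : D (p ^ (i + 1)) = (i + 1 : ℕ) * p ^ i * D p := by
  induction i with
  | zero => simp
  | succ i ih => rw [pow_succ, hD, ih]; push_cast; ring

include hD hA in
lemma D_powA (i : ℕ) : D (A ^ i) = i * (k * T - 2 * c) * A ^ i := by
  rcases i with _ | i
  · simp [D_one D hD]
  · rw [D_pow D hD, hA]; push_cast; ring

include hD hA hT in
lemma D_term (r i m : ℕ) : D (r * A ^ i * T ^ m) + (2 * i + m : ℕ) * c * (r * A ^ i * T ^ m) =
    (r * (k * i) : ℕ) * A ^ i * T ^ (m + 1) + (2 * k * m * r : ℕ) * A ^ (i + 1) * T ^ (m - 1) := by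
  rcases m with _ | m
  · rw [hD, hD, D_nat D hD, D_powA A T k c D hD hA]
    simp [D_one D hD]
    ring
  · rw [hD, hD, D_nat D hD, D_powA A T k c D hD hA, D_pow D hD, hT]
    simp
    ring

include hD hA hT in
lemma GU_succ (m : ℕ) :
    GU A T k (m + 1) = T * GU A T k m + D (GU A T k m) + m * c * GU A T k m + GV A T k m := by
  have hs := gam_support k m
  have e1 : T * GU A T k m + D (GU A T k m) + m * c * GU A T k m + GV A T k m =
      ∑ i ∈ Finset.range (m + 2), (((gam k m).1 i * (1 + k * i) + (gam k m).2 i : ℕ) * A ^ i *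
        T ^ (m + 1 - 2 * i) + (2 * k * (m - 2 * i) * (gam k m).1 i : ℕ) * A ^ (i + 1) *
        T ^ (m + 1 - 2 * (i + 1))) := by
    unfold GU GV
    rw [map_sum, Finset.mul_sum, Finset.mul_sum, ← Finset.sum_add_distrib,
      ← Finset.sum_add_distrib, ← Finset.sum_add_distrib]
    refine Finset.sum_congr rfl fun i _ => ?_
    by_cases hi : 2 * i ≤ m
    · have := D_term A T k c D hD hA hT ((gam k m).1 i) i (m - 2 * i)
      rw [show 2 * i + (m - 2 * i) = m by omega] at this
      rw [show m + 1 - 2 * (i + 1) = m - 2 * i - 1 by omega, show m + 1 - 2 * i = m - 2 * i + 1 by omega]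
      rw [add_assoc (T * _), this]
      push_cast
      ring
    · rw [hs.1 i (by omega)]
      simp
  have e2 : (gam k m).1 (m + 2) = 0 := hs.1 _ (by omega)
  have e3 : (gam k m).2 (m + 2) = 0 := hs.2 _ (by omega)
  rw [e1, Finset.sum_add_distrib]
  have e4 : ∑ i ∈ Finset.range (m + 2), (((gam k m).1 i * (1 + k * i) + (gam k m).2 i : ℕ) : R) *
      A ^ i * T ^ (m + 1 - 2 * i) = ∑ i ∈ Finset.range (m + 3),
      (((gam k m).1 i * (1 + k * i) + (gam k m).2 i : ℕ) : R) * A ^ i * T ^ (m + 1 - 2 * i) := by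
    rw [Finset.sum_range_succ _ (m + 2), e2, e3]
    simp
  rw [e4, Finset.sum_range_succ' _ (m + 2)]
  unfold GU
  rw [Finset.sum_range_succ' _ (m + 2), add_right_comm, ← Finset.sum_add_distrib]
  congr 1
  · refine Finset.sum_congr rfl fun i _ => ?_
    simp only [gam]
    push_cast
    ring
  · simp [gam]

include hD hA hT in
lemma GV_succ (hk : 1 ≤ k) (m : ℕ) :
    GV A T k (m + 1) = D (GV A T k m) + (m + 1 : ℕ) * c * GV A T k m +
      ((k : R) - 1) * A * GU A T k m := by
  have hs := gam_support k m
  have e1 : D (GV A T k m) + (m + 1 : ℕ) * c * GV A T k m + ((k : R) - 1) * A * GU A T k m =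
      ∑ i ∈ Finset.range (m + 2), (((gam k m).2 i * (k * i) : ℕ) * A ^ i *
        T ^ (m + 2 - 2 * i) + (2 * k * (m + 1 - 2 * i) * (gam k m).2 i + (k - 1) * (gam k m).1 i : ℕ)
          * A ^ (i + 1) * T ^ (m + 2 - 2 * (i + 1))) := by
    unfold GU GV
    rw [map_sum, Finset.mul_sum, Finset.mul_sum, ← Finset.sum_add_distrib,
      ← Finset.sum_add_distrib]
    refine Finset.sum_congr rfl fun i _ => ?_
    have hk' : ((k - 1 : ℕ) : R) = k - 1 := by push_cast [hk]; rfl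
    have e0 : m + 2 - 2 * (i + 1) = m - 2 * i := by omega
    by_cases hi : 2 * i ≤ m + 1
    · have := D_term A T k c D hD hA hT ((gam k m).2 i) i (m + 1 - 2 * i)
      rw [show 2 * i + (m + 1 - 2 * i) = m + 1 by omega] at this
      rw [this, show m + 2 - 2 * i = m + 1 - 2 * i + 1 by omega, e0,
        show m + 1 - 2 * i - 1 = m - 2 * i by omega, Nat.cast_add, Nat.cast_mul (k - 1), hk']
      ring
    · rw [hs.1 i (by omega), hs.2 i (by omega)]
      simp
  have e3 : (gam k m).2 (m + 2) = 0 := hs.2 _ (by omega)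
  rw [e1, Finset.sum_add_distrib]
  have e4 : ∑ i ∈ Finset.range (m + 2), (((gam k m).2 i * (k * i) : ℕ) : R) *
      A ^ i * T ^ (m + 2 - 2 * i) = ∑ i ∈ Finset.range (m + 3),
      (((gam k m).2 i * (k * i) : ℕ) : R) * A ^ i * T ^ (m + 2 - 2 * i) := by
    rw [Finset.sum_range_succ _ (m + 2), e3]
    simp
  rw [e4, Finset.sum_range_succ' _ (m + 2)]
  unfold GV
  rw [Finset.sum_range_succ' _ (m + 2), add_right_comm (Finset.sum _ _), ← Finset.sum_add_distrib]
  congr 1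
  · refine Finset.sum_congr rfl fun i _ => ?_
    simp only [gam]
    push_cast
    ring

lemma GU_zero : GU A T k 0 = 1 ∧ GV A T k 0 = 0 := by
  simp [GU, GV, gam, Finset.sum_range_succ]

end General

/-- `DD` as an additive map -/
def DDa (k : ℕ) : PP →+ PP where
  toFun := DD k
  map_zero' := DD_zero k
  map_add' p q := by simp [DD, mul_add]

lemma DDa_apply (k : ℕ) (p : PP) : DDa k p = DD k p := rfl

lemma SUV_eq {k : ℕ} (hk : 1 ≤ k) (m : ℕ) :
    SU k (m + 1) = GU pa (pE + pb) k m ∧ SV k (m + 1) = GV pa (pE + pb) k m := by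
  have hD : ∀ p q, DDa k (p * q) = p * DDa k q + q * DDa k p := by
    intro p q
    simp only [DDa_apply, DD, derivative_mul]
    ring
  have hA : DDa k pa = k * pa * (pE + pb) - 2 * 0 * pa := by
    simp only [DDa_apply, DD, pa, derivative_mul, derivative_add,
      derivative_X, derivative_one, derivative_C, pE, pb]
    ring
  have hT : DDa k (pE + pb) = 2 * k * pa - 0 * (pE + pb) := by
    simp only [DDa_apply, DD, derivative_add,
      derivative_X, derivative_one, derivative_C, pE, pb]
    ring
  induction m with
  | zero => rw [(GU_zero _ _ k).1, (GU_zero _ _ k).2]; exact SU_one hk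
  | succ m ih =>
    rw [GU_succ _ _ k 0 (DDa k) hD hA hT, GV_succ _ _ k 0 (DDa k) hD hA hT hk, ← ih.1, ← ih.2,
      SU_succ hk (m + 1), SV_succ hk (m + 1)]
    constructor
    · simp only [DDa_apply]; ring
    · simp only [DDa_apply]; ring

/-- the derivation for the Eulerian recurrence -/
def DXa (k : ℕ) : Polynomial ℝ →+ Polynomial ℝ where
  toFun p := (k : Polynomial ℝ) * X * (1 - X) * derivative p
  map_zero' := by simp
  map_add' p q := by simp [mul_add]

lemma DXa_apply (k : ℕ) (p : Polynomial ℝ) :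
    DXa k p = (k : Polynomial ℝ) * X * (1 - X) * derivative p := rfl

/-- solution of the Eulerian recurrence -/
lemma euler_solution {k : ℕ} (hk : 1 ≤ k) (P : ℕ → Polynomial ℝ) (h0 : P 0 = 1)
    (hP : ∀ m, P (m + 1) = (1 + ((m + 1 : ℕ) : Polynomial ℝ) * (k : Polynomial ℝ) * X) * P m +
      (k : Polynomial ℝ) * X * (1 - X) * derivative (P m)) (m : ℕ) :
    P m = GU X (1 + X) k m + GV X (1 + X) k m := by
  have hD : ∀ p q, DXa k (p * q) = p * DXa k q + q * DXa k p := by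
    intro p q
    simp only [DXa_apply, derivative_mul]
    ring
  have hA : DXa k X = (k : Polynomial ℝ) * X * (1 + X) - 2 * ((k : Polynomial ℝ) * X) * X := by
    simp only [DXa_apply, derivative_X]
    ring
  have hT : DXa k (1 + X) = 2 * (k : Polynomial ℝ) * X - ((k : Polynomial ℝ) * X) * (1 + X) := by
    simp only [DXa_apply, derivative_add,
      derivative_X, derivative_one]
    ring
  induction m with
  | zero => rw [(GU_zero _ _ k).1, (GU_zero _ _ k).2, h0, add_zero]
  | succ m ih =>
    rw [GU_succ _ _ k _ (DXa k) hD hA hT, GV_succ _ _ k _ (DXa k) hD hA hT hk, hP, ih]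
    simp only [DXa_apply, derivative_add]
    push_cast
    ring

/-! ### The recurrence for the `1/k`-Eulerian polynomials -/

open Equiv Equiv.Perm in
lemma cyc_card_swap {N : ℕ} (g : Perm (Fin N)) (x : Fin N) (h : g x ≠ x) :
    (swap x (g x) * g).cycleType.card + 1 =
      g.cycleType.card + (if g (g x) = x then 0 else 1) := by
  set c := g.cycleOf x with hc
  have hcx : c x = g x := by rw [hc, cycleOf_apply_self]
  have hccx : c (g x) = g (g x) := by
    rw [hc]; exact SameCycle.cycleOf_apply (SameCycle.refl g x |>.apply_right)
  have hcc : IsCycle c := isCycle_cycleOf g h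
  have hmem : c ∈ cycleFactorsFinset g := by
    rw [hc, cycleOf_mem_cycleFactorsFinset_iff, mem_support]; exact h
  set d := g * c⁻¹ with hd
  have hdis : Disjoint d c := disjoint_mul_inv_of_mem_cycleFactorsFinset hmem
  have hg : g = c * d := by rw [← hdis.commute.eq, hd]; simp
  have hfix : ∀ y, c y = y → (swap x (g x) * c) y = y := by
    intro y hy
    have h1 : y ≠ x := by rintro rfl; exact h (hcx ▸ hy)
    have h2 : y ≠ g x := by
      rintro rfl
      rw [hccx] at hy
      exact h (g.injective hy)
    rw [Perm.mul_apply, hy, swap_apply_of_ne_of_ne h1 h2]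
  have hdis2 : Disjoint (swap x (g x) * c) d := by
    intro y
    rcases hdis y with h1 | h1
    · exact Or.inr h1
    · exact Or.inl (hfix y h1)
  have e1 : g.cycleType.card = 1 + d.cycleType.card := by
    conv_lhs => rw [hg, hdis.symm.cycleType_mul, hcc.cycleType]
    simp [add_comm]
  have e2 : (swap x (g x) * g).cycleType.card =
      (swap x (g x) * c).cycleType.card + d.cycleType.card := by
    have : swap x (g x) * g = (swap x (g x) * c) * d := by
      rw [mul_assoc]; congr 1
    rw [this, hdis2.cycleType_mul]
    simp
  rw [e1, e2]
  split_ifs with h3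
  · have : swap x (g x) * c = 1 := by
      have hs : c = swap x (c x) :=
        hcc.eq_swap_of_apply_apply_eq_self (by rw [hcx]; exact h) (by rw [hcx, hccx, h3])
      rw [hcx] at hs
      rw [hs]; simp
    rw [this]; simp; omega
  · have : IsCycle (swap x (g x) * c) := by
      have := hcc.swap_mul (x := x) (by rw [hcx]; exact h) (by rw [hcx, hccx]; exact h3)
      rwa [hcx] at this
    rw [this.cycleType]; simp

open Equiv Equiv.Perm in
lemma fix_card_swap {N : ℕ} (g : Perm (Fin N)) (x : Fin N) (h : g x ≠ x) :
    (Finset.univ.filter fun i => (swap x (g x) * g) i = i).card =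
      (Finset.univ.filter fun i => g i = i).card + 1 + (if g (g x) = x then 1 else 0) := by
  have key : (Finset.univ.filter fun i => (swap x (g x) * g) i = i) =
      insert x ((Finset.univ.filter fun i => g i = i) ∪
        (if g (g x) = x then {g x} else ∅)) := by
    ext y
    simp only [Finset.mem_filter, Finset.mem_univ, true_and, Finset.mem_insert, Finset.mem_union]
    by_cases hy : y = x
    · subst hy; simp
    · by_cases hy2 : y = g x
      · subst hy2
        have h5 : g (g x) ≠ g x := fun h' => h (g.injective h')
        simp only [Perm.mul_apply, hy, h5, false_or]
        by_cases h6 : g (g x) = x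
        · simp [h6]
        · rw [swap_apply_of_ne_of_ne h6 h5]
          simp [h5, h6]
      · have h7 : y ∉ (if g (g x) = x then ({g x} : Finset (Fin N)) else ∅) := by
          split_ifs <;> simp [hy2]
        simp only [Perm.mul_apply, hy, h7, or_false, false_or]
        rw [swap_apply_eq_iff, swap_apply_of_ne_of_ne hy hy2]
  rw [key, Finset.card_insert_of_notMem, Finset.card_union_of_disjoint]
  · split_ifs <;> simp
  · split_ifs
    · simp only [Finset.disjoint_singleton_right, Finset.mem_filter, Finset.mem_univ, true_and]
      exact fun h' => h (g.injective h')
    · simp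
  · split_ifs <;> simp [h, Ne.symm h]

lemma cyc_swap {N : ℕ} (g : Equiv.Perm (Fin N)) (x : Fin N) (h : g x ≠ x) :
    cycStat (Equiv.swap x (g x) * g) = cycStat g + 1 := by
  unfold cycStat
  have h1 := cyc_card_swap g x h
  have h2 := fix_card_swap g x h
  split_ifs at h1 h2 <;> omega

lemma cyc_le {N : ℕ} (g : Equiv.Perm (Fin N)) : cycStat g ≤ N := by
  unfold cycStat
  have h1 : g.cycleType.card ≤ g.support.card := by
    rw [← Equiv.Perm.sum_cycleType]
    have := Multiset.card_nsmul_le_sum (s := g.cycleType) (a := 1)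
      (fun x hx => le_trans one_le_two (Equiv.Perm.two_le_of_mem_cycleType hx))
    simpa using this
  have h2 : g.support.card + (Finset.univ.filter fun i => g i = i).card = N := by
    have := Finset.card_filter_add_card_filter_not (s := Finset.univ) (fun i : Fin N => g i = i)
    rw [Finset.card_univ, Fintype.card_fin] at this
    rw [add_comm]
    exact this
  omega

open Equiv.Perm in
lemma cyc_decompose_zero {n : ℕ} (e : Equiv.Perm (Fin n)) :
    cycStat (decomposeFin.symm (0, e)) = cycStat e + 1 := by
  have h1 : decomposeFin.symm (0, e) = e.extendDomain (finSuccAboveEquiv (0 : Fin (n + 1))) := by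
    ext x
    congr 1
    induction x using Fin.cases with
    | zero =>
      rw [decomposeFin_symm_apply_zero, Equiv.Perm.extendDomain_apply_not_subtype]
      simp
    | succ x =>
      have := Equiv.Perm.extendDomain_apply_image e (finSuccAboveEquiv (0 : Fin (n + 1))) x
      simp [finSuccAboveEquiv_apply] at this
      rw [decomposeFin_symm_apply_succ]
      simp [this]
  unfold cycStat
  rw [h1, cycleType_extendDomain, ← h1]
  rw [Fin.univ_succ, Finset.filter_cons]
  simp only [decomposeFin_symm_apply_zero, if_true]
  rw [Finset.card_cons, Finset.filter_map, Finset.card_map, add_assoc]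
  congr 3
  ext x
  simp

open Equiv.Perm in
lemma cyc_decompose_succ {n : ℕ} (q : Fin n) (e : Equiv.Perm (Fin n)) :
    cycStat (decomposeFin.symm (q.succ, e)) = cycStat e := by
  have h := cyc_swap (decomposeFin.symm (q.succ, e)) 0
    (by rw [decomposeFin_symm_apply_zero]; exact Fin.succ_ne_zero q)
  have h2 : Equiv.swap 0 (decomposeFin.symm (q.succ, e) 0) * decomposeFin.symm (q.succ, e) =
      decomposeFin.symm (0, e) := by
    rw [decomposeFin_symm_apply_zero]
    ext x
    congr 1
    induction x using Fin.cases with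
    | zero => simp
    | succ x => simp
  rw [h2, cyc_decompose_zero] at h
  omega

open Equiv.Perm in
lemma exc_decompose_zero {n : ℕ} (e : Equiv.Perm (Fin n)) :
    excStat (decomposeFin.symm (0, e)) = excStat e := by
  unfold excStat
  rw [Fin.univ_succ, Finset.filter_cons]
  simp only [decomposeFin_symm_apply_zero, lt_self_iff_false, if_false]
  rw [Finset.filter_map, Finset.card_map]
  congr 1
  ext x
  simp

open Equiv.Perm in
lemma exc_decompose_succ {n : ℕ} (q : Fin n) (e : Equiv.Perm (Fin n)) :
    excStat (decomposeFin.symm (q.succ, e)) = if e.symm q < q then excStat e else excStat e + 1 := by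
  unfold excStat
  rw [Fin.univ_succ, Finset.filter_cons]
  have h0 : ((0 : Fin (n + 1)) : ℕ) < (decomposeFin.symm (q.succ, e) 0 : ℕ) := by
    rw [decomposeFin_symm_apply_zero]; simp
  rw [if_pos h0, Finset.card_cons, Finset.filter_map, Finset.card_map]
  have h1 : (Finset.univ.filter ((fun i : Fin (n + 1) => (i : ℕ) < (decomposeFin.symm (q.succ, e) i : ℕ)) ∘
      (⟨Fin.succ, Fin.succ_injective n⟩ : Fin n ↪ Fin (n + 1)))) =
      (Finset.univ.filter fun i : Fin n => (i : ℕ) < (e i : ℕ)).erase (e.symm q) := by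
    ext x
    simp only [Finset.mem_filter, Finset.mem_univ, true_and, Function.comp,
      Function.Embedding.coeFn_mk, Finset.mem_erase, decomposeFin_symm_apply_succ]
    by_cases hx : e x = q
    · have : x = e.symm q := by rw [← hx]; simp
      simp [hx, this]
    · have : x ≠ e.symm q := by rintro rfl; simp at hx
      rw [Equiv.swap_apply_of_ne_of_ne (Fin.succ_ne_zero _) (by simpa using hx)]
      simp [this]
  have h1' := congrArg Finset.card h1
  have h2 : (e.symm q) ∈ (Finset.univ.filter fun i : Fin n => (i : ℕ) < (e i : ℕ)) ↔
      e.symm q < q := by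
    simp
  refine (congrArg (· + 1) h1').trans ?_
  show (Finset.card _) + 1 = _
  split_ifs with h
  · rw [Finset.card_erase_add_one (h2.2 h)]
  · rw [Finset.erase_eq_of_notMem (fun h' => h (h2.1 h'))]

lemma exc_count {n : ℕ} (e : Equiv.Perm (Fin n)) (a b : Polynomial ℝ) :
    (∑ q : Fin n, if e.symm q < q then a else b) =
      (excStat e : Polynomial ℝ) * a + ((n : Polynomial ℝ) - (excStat e : Polynomial ℝ)) * b := by
  rw [← Equiv.sum_comp e]
  simp only [Equiv.symm_apply_apply]
  rw [Finset.sum_ite, Finset.sum_const, Finset.sum_const]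
  have h := Finset.card_filter_add_card_filter_not (s := Finset.univ) (fun i : Fin n => i < e i)
  rw [Finset.card_univ, Fintype.card_fin] at h
  have h1 : (Finset.univ.filter fun i : Fin n => i < e i).card = excStat e := by
    unfold excStat; congr 1
  rw [h1] at h ⊢
  rw [nsmul_eq_mul, nsmul_eq_mul]
  have h3 : (n : Polynomial ℝ) = (excStat e : Polynomial ℝ) +
    ((Finset.univ.filter fun i : Fin n => ¬ i < e i).card : Polynomial ℝ) := by
    rw [← Nat.cast_add, h]
  rw [h3]
  ring

lemma X_mul_derivative_pow (r : ℕ) :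
    X * derivative ((X : Polynomial ℝ) ^ r) = (r : Polynomial ℝ) * X ^ r := by
  rcases r with _ | r
  · simp
  · rw [derivative_X_pow]; simp; ring

lemma Apoly_succ (k n : ℕ) : Apoly k (n + 1) = (1 + (n : Polynomial ℝ) * (k : Polynomial ℝ) * X) *
    Apoly k n + (k : Polynomial ℝ) * X * (1 - X) * derivative (Apoly k n) := by
  unfold Apoly
  rw [← Equiv.sum_comp Equiv.Perm.decomposeFin.symm, Fintype.sum_prod_type, Finset.sum_comm,
    derivative_sum, Finset.mul_sum, Finset.mul_sum, ← Finset.sum_add_distrib]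
  refine Finset.sum_congr rfl fun e _ => ?_
  rw [Fin.sum_univ_succ]
  simp only [exc_decompose_zero, cyc_decompose_zero, exc_decompose_succ, cyc_decompose_succ]
  have hc := cyc_le e
  rw [Nat.add_sub_add_right, show n + 1 - cycStat e = n - cycStat e + 1 by omega]
  have h1 : ∀ q : Fin n, (X : Polynomial ℝ) ^ (if e.symm q < q then excStat e else excStat e + 1) *
      (C (k : ℝ)) ^ (n - cycStat e + 1) = if e.symm q < q then
        X ^ excStat e * (C (k : ℝ)) ^ (n - cycStat e + 1) else
        X ^ (excStat e + 1) * (C (k : ℝ)) ^ (n - cycStat e + 1) := by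
    intro q; split_ifs <;> rfl
  rw [Finset.sum_congr rfl fun q _ => h1 q, exc_count]
  have h2 : derivative (X ^ excStat e * (C (k : ℝ)) ^ (n - cycStat e)) =
      derivative (X ^ excStat e) * (C (k : ℝ)) ^ (n - cycStat e) := by
    rw [derivative_mul, ← C_pow, derivative_C]; simp
  rw [h2]
  have h3 := X_mul_derivative_pow (excStat e)
  have h4 : (C (k : ℝ) : Polynomial ℝ) = (k : Polynomial ℝ) := by simp
  rw [h4]
  linear_combination (-(k : Polynomial ℝ) * (1 - X) * (k : Polynomial ℝ) ^ (n - cycStat e)) * h3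

lemma Apoly_one (k : ℕ) : Apoly k 1 = 1 := by
  have h := Apoly_succ k 0
  have h0 : Apoly k 0 = 1 := by simp [Apoly, excStat]
  rw [zero_add, h0] at h
  rw [h]; simp

lemma Apoly_eq {k : ℕ} (hk : 1 ≤ k) (m : ℕ) :
    Apoly k (m + 1) = GU X (1 + X) k m + GV X (1 + X) k m :=
  euler_solution hk (fun m => Apoly k (m + 1)) (Apoly_one k) (fun m => Apoly_succ k (m + 1)) m

/-! ### Evaluation at `b = 0` -/

/-- no young leaf and no removable old leaf -/
def GoodF {n k : ℕ} (f : Fin n → Option (Fin n × Fin k)) : Prop :=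
  NoYoungLeaf f ∧ ∀ u, ¬ removableOldLeaf f u

/-- evaluation at `b = 0` -/
def ev : PP →+* Polynomial ℝ := Polynomial.evalRingHom 0

lemma ev_pb : ev pb = 0 := by simp [ev, pb]
lemma ev_pE : ev pE = 1 + X := by simp [ev, pE]
lemma ev_pa : ev pa = X := by simp [ev, pa]
lemma ev_pc : ev pc = 0 := by simp [ev, pc]

section Evaluation

variable {n k : ℕ} (f : Fin n → Option (Fin n × Fin k))

lemma ev_wt_not_good (hG : ¬ GoodF f) : ev (wt f) = 0 := by
  suffices h : ∃ z, ev (om f z) = 0 by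
    obtain ⟨z, hz⟩ := h
    unfold wt
    rw [map_prod]
    exact Finset.prod_eq_zero (Finset.mem_univ z) hz
  unfold GoodF at hG
  by_cases h1 : NoYoungLeaf f
  · have h2 : ∃ u, removableOldLeaf f u := by
      by_contra h2
      exact hG ⟨h1, fun u hu => h2 ⟨u, hu⟩⟩
    obtain ⟨u, hold, hleaf, r, s, hu, hr, _, hAL, hDG⟩ := h2
    have hOC : OC f r u := by
      obtain ⟨z, hz⟩ := (oldNode_iff f u).1 hold
      obtain ⟨⟨t, ht⟩, hz2⟩ := id hz
      rw [hu] at ht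
      simp only [Option.some.injEq, Prod.mk.injEq] at ht
      rw [ht.1]; exact hz
    have a1 : hasChild f r := ⟨u, s, hu⟩
    have a2 : OCL f r := ⟨u, hOC, hleaf⟩
    have a3 : f r = none ∧ AL f r ∧ DG f r := ⟨hr, hAL, u, hOC, hDG⟩
    refine ⟨r, ?_⟩
    unfold om
    rw [if_pos a1, if_pos a2, if_pos a3]
    split_ifs
    · exact ev_pb
    · exact ev_pc
  · unfold NoYoungLeaf at h1
    push Not at h1
    obtain ⟨v, ⟨⟨y, s, hv⟩, hold⟩, hleaf⟩ := h1
    refine ⟨v, ?_⟩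
    unfold om
    rw [if_neg hleaf, if_neg (by rw [hv]; simp), if_neg hold]
    exact ev_pb

lemma ev_om_good (hG : GoodF f) (hB : ¬ BarC f) (z : Fin n) :
    ev (om f z) = if OCL f z then X else if oldNode f z ∧ ¬ hasChild f z then 1 else 1 + X := by
  have hB' : ∀ z, ¬ (LR f z ∧ AL f z) := fun z hz => hB ⟨z, hz⟩
  unfold om
  by_cases h1 : hasChild f z
  · rw [if_pos h1]
    by_cases h2 : OCL f z
    · rw [if_pos h2, if_pos h2, if_neg, ev_pa]
      rintro ⟨h3, h4, h5⟩
      obtain ⟨v, hv, hleaf⟩ := h2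
      obtain ⟨v', hv', hlt⟩ := h5
      obtain rfl := OC_unique f hv hv'
      obtain ⟨⟨s, hs⟩, hmax⟩ := id hv
      refine hG.2 v ⟨(oldNode_iff f v).2 ⟨z, hv⟩, hleaf, z, s, hs, h3, ?_, h4, hlt⟩
      rintro x ⟨t, ht⟩ hxv
      by_contra hx
      refine hG.1 x ⟨⟨⟨z, t, ht⟩, ?_⟩, hx⟩
      intro hold
      obtain ⟨z', hz'⟩ := (oldNode_iff f x).1 hold
      obtain ⟨⟨t', ht'⟩, _⟩ := id hz'
      rw [ht] at ht'
      simp only [Option.some.injEq, Prod.mk.injEq] at ht'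
      obtain ⟨rfl, -⟩ := ht'
      exact hxv (OC_unique f hz' hv)
    · rw [if_neg h2, if_neg h2, if_neg (hB' z), if_neg (fun h => h.2 h1), ev_pE]
  · have h2 : ¬ OCL f z := fun h => h1 (OCL_hasChild f h)
    rw [if_neg h1, if_neg h2]
    by_cases h3 : f z = none
    · have h4 : ¬ oldNode f z := by
        rintro ⟨y, s, h, _⟩
        rw [h3] at h; simp at h
      rw [if_pos h3, if_neg (fun h => hB' z ⟨h, AL_of_leaf f h1⟩), if_neg (fun h => h4 h.1), ev_pE]
    · rw [if_neg h3]
      have h4 : oldNode f z := by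
        by_contra h4
        obtain ⟨⟨y, s⟩, hy⟩ := Option.ne_none_iff_exists'.1 h3
        exact hG.1 z ⟨⟨⟨y, s, hy⟩, h4⟩, h1⟩
      rw [if_pos h4, if_pos ⟨h4, h1⟩, map_one]

lemma OCL_card : (Finset.univ.filter fun z => OCL f z).card = oleafStat f := by
  unfold oleafStat
  symm
  refine Finset.card_bij' (fun v hv => if h : ∃ z, OC f z v then h.choose else v)
    (fun z hz => if h : ∃ v, OC f z v then h.choose else z) ?_ ?_ ?_ ?_
  · intro v hv
    simp only [Finset.mem_filter, Finset.mem_univ, true_and] at hv ⊢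
    have h := (oldNode_iff f v).1 hv.1
    rw [dif_pos h]
    exact ⟨v, h.choose_spec, hv.2⟩
  · intro z hz
    simp only [Finset.mem_filter, Finset.mem_univ, true_and] at hz ⊢
    obtain ⟨v, hv, hl⟩ := hz
    have h : ∃ v, OC f z v := ⟨v, hv⟩
    rw [dif_pos h, OC_unique f h.choose_spec hv]
    exact ⟨(oldNode_iff f v).2 ⟨z, hv⟩, hl⟩
  · intro v hv
    simp only [Finset.mem_filter, Finset.mem_univ, true_and] at hv ⊢
    have h := (oldNode_iff f v).1 hv.1
    simp only [dif_pos h]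
    have h' : ∃ v', OC f h.choose v' := ⟨v, h.choose_spec⟩
    rw [dif_pos h']
    exact OC_unique f h'.choose_spec h.choose_spec
  · intro z hz
    simp only [Finset.mem_filter, Finset.mem_univ, true_and] at hz ⊢
    obtain ⟨v, hv, hl⟩ := hz
    have h : ∃ v, OC f z v := ⟨v, hv⟩
    simp only [dif_pos h]
    have h' : ∃ z', OC f z' h.choose := ⟨z, h.choose_spec⟩
    rw [dif_pos h']
    exact OC_parent f h'.choose_spec h.choose_spec

lemma rest_card : (Finset.univ.filter fun z => ¬ OCL f z ∧ ¬ (oldNode f z ∧ ¬ hasChild f z)).card +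
    2 * oleafStat f = n := by
  have h1 := Finset.card_filter_add_card_filter_not (s := Finset.univ) (fun z => OCL f z)
  have h2 := Finset.card_filter_add_card_filter_not (s := Finset.univ.filter fun z => ¬ OCL f z)
    (fun z => oldNode f z ∧ ¬ hasChild f z)
  rw [Finset.filter_filter, Finset.filter_filter] at h2
  rw [OCL_card, Finset.card_univ, Fintype.card_fin] at h1
  have h3 : (Finset.univ.filter fun z => ¬ OCL f z ∧ oldNode f z ∧ ¬ hasChild f z).card =
      oleafStat f := by
    unfold oleafStat
    congr 1
    ext z
    simp only [Finset.mem_filter, Finset.mem_univ, true_and]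
    exact ⟨fun h => h.2, fun h => ⟨fun h' => h.2 (OCL_hasChild f h'), h⟩⟩
  omega

lemma ev_wt_good (hG : GoodF f) (hB : ¬ BarC f) :
    ev (wt f) = X ^ oleafStat f * (1 + X) ^ (n - 2 * oleafStat f) := by
  unfold wt
  rw [map_prod, Finset.prod_congr rfl fun z _ => ev_om_good f hG hB z, Finset.prod_ite,
    Finset.prod_const, OCL_card, Finset.prod_ite, Finset.prod_const, Finset.prod_const, one_pow,
    one_mul, Finset.filter_filter]
  have := rest_card f
  congr 2
  omega

end Evaluation

lemma exists_LR {m k : ℕ} (f : Fin (m + 1) → Option (Fin (m + 1) × Fin k)) (hf : IsForest f) :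
    ∃ r, LR f r := by
  have h0 : f 0 = none := by
    rcases h : f 0 with _ | ⟨y, s⟩
    · rfl
    · exact absurd (hf _ _ _ h) (not_lt.2 (Fin.zero_le y))
  let S := Finset.univ.filter fun x => f x = none
  have hS : S.Nonempty := ⟨0, by simp [S, h0]⟩
  refine ⟨S.max' hS, ?_, ?_⟩
  · have := S.max'_mem hS
    simp only [S, Finset.mem_filter, Finset.mem_univ, true_and] at this
    exact this
  · intro r hr
    exact S.le_max' _ (by simp [S, hr])

lemma hat_iff {m k : ℕ} (f : Fin (m + 1) → Option (Fin (m + 1) × Fin k)) (hf : IsForest f) :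
    inHatClass f ↔ ¬ BarC f := by
  constructor
  · rintro ⟨r, h1, h2, _, x, j, hj, hx⟩ ⟨r', h3, h4⟩
    obtain rfl := LR_unique f (⟨h1, h2⟩ : LR f r) h3
    exact h4 x j hj hx
  · intro h
    obtain ⟨r, hr⟩ := exists_LR f hf
    have h1 : ¬ AL f r := fun h' => h ⟨r, hr, h'⟩
    unfold AL at h1
    push Not at h1
    obtain ⟨x, j, hj, hx⟩ := h1
    exact ⟨r, hr.1, hr.2, ⟨x, j, hx⟩, x, j, hj, hx⟩

lemma oleaf_pos {m k : ℕ} (f : Fin (m + 1) → Option (Fin (m + 1) × Fin k)) (hf : IsForest f)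
    (hB : ¬ BarC f) : 1 ≤ oleafStat f := by
  have hleaf : ¬ hasChild f (Fin.last m) := by
    rintro ⟨x, s, hx⟩
    exact absurd (hf _ _ _ hx) (not_lt.2 (Fin.le_last x))
  have h1 : f (Fin.last m) ≠ none := fun h =>
    hB ⟨Fin.last m, ⟨h, fun r _ => Fin.le_last r⟩, AL_of_leaf f hleaf⟩
  obtain ⟨⟨y, s⟩, hy⟩ := Option.ne_none_iff_exists'.1 h1
  unfold oleafStat
  rw [Nat.one_le_iff_ne_zero, ← Nat.pos_iff_ne_zero, Finset.card_pos]
  exact ⟨Fin.last m, by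
    simp only [Finset.mem_filter, Finset.mem_univ, true_and]
    exact ⟨⟨y, s, hy, fun x _ => Fin.le_last x⟩, hleaf⟩⟩

lemma ev_SV (k m : ℕ) : ev (SV k (m + 1)) = ∑ i ∈ Finset.Icc 1 ((m + 1) / 2),
      C ((Nat.card {f : Fin (m + 1) → Option (Fin (m + 1) × Fin k) //
            IsForest f ∧ inHatClass f ∧ oleafStat f = i ∧ NoYoungLeaf f ∧
              (∀ u, ¬ removableOldLeaf f u) ∧ (∀ u, ¬ removableYoungLeaf f u)} : ℕ) : ℝ) *
        X ^ i * (1 + X) ^ (m + 1 - 2 * i) := by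
  unfold SV
  rw [map_sum]
  have e1 : ∀ f ∈ Fst (m + 1) k, ev (if BarC f then 0 else wt f) =
      if ¬ BarC f ∧ GoodF f then X ^ oleafStat f * (1 + X) ^ (m + 1 - 2 * oleafStat f) else 0 := by
    intro f hf
    by_cases hB : BarC f
    · simp [hB]
    · by_cases hG : GoodF f
      · rw [if_neg hB, if_pos ⟨hB, hG⟩, ev_wt_good f hG hB]
      · rw [if_neg hB, if_neg (fun h => hG h.2), ev_wt_not_good f hG]
  rw [Finset.sum_congr rfl e1, ← Finset.sum_filter,
    ← Finset.sum_fiberwise_of_maps_to (t := Finset.Icc 1 ((m + 1) / 2)) (g := oleafStat)]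
  · refine Finset.sum_congr rfl fun i _ => ?_
    have e2 : Nat.card {f : Fin (m + 1) → Option (Fin (m + 1) × Fin k) //
            IsForest f ∧ inHatClass f ∧ oleafStat f = i ∧ NoYoungLeaf f ∧
              (∀ u, ¬ removableOldLeaf f u) ∧ (∀ u, ¬ removableYoungLeaf f u)} =
        (((Fst (m + 1) k).filter fun f => ¬ BarC f ∧ GoodF f).filter
          fun f => oleafStat f = i).card := by
      rw [Nat.card_eq_fintype_card, Fintype.card_subtype]
      congr 1
      ext f
      simp only [Finset.mem_filter, Finset.mem_univ, true_and, mem_Fst]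
      constructor
      · rintro ⟨h1, h2, h3, h4, h5, _⟩
        exact ⟨⟨h1, (hat_iff f h1).1 h2, And.intro h4 h5⟩, h3⟩
      · rintro ⟨⟨h1, h2, h4, h5⟩, h3⟩
        exact ⟨h1, (hat_iff f h1).2 h2, h3, h4, h5, fun u hu => h4 u ⟨hu.1, hu.2.1⟩⟩
    rw [e2, Finset.sum_congr rfl (g := fun _ => X ^ i * (1 + X) ^ (m + 1 - 2 * i))]
    · rw [Finset.sum_const, nsmul_eq_mul, mul_assoc]
      simp
    · intro f hf
      rw [(Finset.mem_filter.1 hf).2]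
  · intro f hf
    obtain ⟨h1, h2, _⟩ := Finset.mem_filter.1 hf
    rw [Finset.mem_Icc]
    refine ⟨oleaf_pos f (mem_Fst.1 h1) h2, ?_⟩
    have := rest_card f
    omega

lemma ev_GV (k m : ℕ) : ev (GV pa (pE + pb) k m) = GV X (1 + X) k m := by
  unfold GV
  simp [map_sum, ev_pa, ev_pE, ev_pb]

lemma GV_forest {k : ℕ} (hk : 1 ≤ k) (m : ℕ) : GV X (1 + X) k m =
    ∑ i ∈ Finset.Icc 1 ((m + 1) / 2),
      C ((Nat.card {f : Fin (m + 1) → Option (Fin (m + 1) × Fin k) //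
            IsForest f ∧ inHatClass f ∧ oleafStat f = i ∧ NoYoungLeaf f ∧
              (∀ u, ¬ removableOldLeaf f u) ∧ (∀ u, ¬ removableYoungLeaf f u)} : ℕ) : ℝ) *
        X ^ i * (1 + X) ^ (m + 1 - 2 * i) := by
  rw [← ev_SV, (SUV_eq hk m).2, ev_GV]

/-! ### Symmetry, unimodality and uniqueness -/

/-- coefficients of `x^i (1+x)^(N-2i)` -/
def TT (N i j : ℕ) : ℕ := if i ≤ j then (N - 2 * i).choose (j - i) else 0

lemma TT_symm {N i j : ℕ} (hi : 2 * i ≤ N) (hj : j ≤ N) : TT N i j = TT N i (N - j) := by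
  unfold TT
  split_ifs with h1 h2 h2
  · exact Nat.choose_symm_of_eq_add (by omega)
  · exact Nat.choose_eq_zero_of_lt (by omega)
  · exact (Nat.choose_eq_zero_of_lt (by omega)).symm
  · rfl

lemma TT_big {N i j : ℕ} (hi : 2 * i ≤ N) (hj : N < j) : TT N i j = 0 := by
  unfold TT
  rw [if_pos (by omega)]
  exact Nat.choose_eq_zero_of_lt (by omega)

lemma TT_mono {N i j : ℕ} (hj : 2 * j + 1 ≤ N) : TT N i j ≤ TT N i (j + 1) := by
  unfold TT
  by_cases h : i ≤ j
  · rw [if_pos h, if_pos (by omega), show j + 1 - i = (j - i) + 1 by omega]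
    have h1 := Nat.choose_succ_right_eq (N - 2 * i) (j - i)
    have h2 : (j - i) + 1 ≤ N - 2 * i - (j - i) := by omega
    have h3 := Nat.mul_le_mul_left ((N - 2 * i).choose (j - i)) h2
    rw [← h1] at h3
    exact Nat.le_of_mul_le_mul_right h3 (Nat.succ_pos _)
  · rw [if_neg h]; exact Nat.zero_le _

lemma coeff_gterm (g i M j : ℕ) : ((g : Polynomial ℝ) * X ^ i * (1 + X) ^ M).coeff j =
    ((g * (if i ≤ j then M.choose (j - i) else 0) : ℕ) : ℝ) := by
  rw [mul_assoc, ← Polynomial.C_eq_natCast, coeff_C_mul, coeff_X_pow_mul', coeff_one_add_X_pow]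
  split_ifs <;> simp

lemma coeff_gsum (g : ℕ → ℕ) (N L j : ℕ) :
    (∑ i ∈ Finset.range L, (g i : Polynomial ℝ) * X ^ i * (1 + X) ^ (N - 2 * i)).coeff j =
      ((∑ i ∈ Finset.range L, g i * TT N i j : ℕ) : ℝ) := by
  rw [finset_sum_coeff]
  push_cast
  refine Finset.sum_congr rfl fun i _ => ?_
  rw [coeff_gterm]
  simp [TT]

lemma gsum_props (g : ℕ → ℕ) (N L : ℕ) (hg : ∀ i, N < 2 * i → g i = 0) (P : Polynomial ℝ)
    (hP : P = ∑ i ∈ Finset.range L, (g i : Polynomial ℝ) * X ^ i * (1 + X) ^ (N - 2 * i)) :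
    (∀ j, j ≤ N → P.coeff j = P.coeff (N - j)) ∧ (∀ j, N < j → P.coeff j = 0) ∧
    (∀ j, 2 * j + 1 ≤ N → P.coeff j ≤ P.coeff (j + 1)) := by
  subst hP
  simp only [coeff_gsum]
  refine ⟨fun j hj => ?_, fun j hj => ?_, fun j hj => ?_⟩
  · congr 1
    refine Finset.sum_congr rfl fun i _ => ?_
    by_cases h : 2 * i ≤ N
    · rw [TT_symm h hj]
    · rw [hg i (by omega)]; simp
  · rw [Nat.cast_eq_zero]
    refine Finset.sum_eq_zero fun i _ => ?_
    by_cases h : 2 * i ≤ N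
    · rw [TT_big h hj, mul_zero]
    · rw [hg i (by omega), zero_mul]
  · rw [Nat.cast_le]
    exact Finset.sum_le_sum fun i _ => Nat.mul_le_mul_left _ (TT_mono hj)

lemma GU_props (k m : ℕ) :
    (∀ j, j ≤ m → (GU X (1 + X) k m : Polynomial ℝ).coeff j = (GU X (1 + X) k m).coeff (m - j)) ∧
    (∀ j, m < j → (GU X (1 + X) k m : Polynomial ℝ).coeff j = 0) ∧
    (∀ j, 2 * j + 1 ≤ m → (GU X (1 + X) k m : Polynomial ℝ).coeff j ≤
      (GU X (1 + X) k m).coeff (j + 1)) :=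
  gsum_props (gam k m).1 m (m + 2) (gam_support k m).1 _ rfl

lemma GV_props (k m : ℕ) :
    (∀ j, j ≤ m + 1 → (GV X (1 + X) k m : Polynomial ℝ).coeff j =
      (GV X (1 + X) k m).coeff (m + 1 - j)) ∧
    (∀ j, m + 1 < j → (GV X (1 + X) k m : Polynomial ℝ).coeff j = 0) ∧
    (∀ j, 2 * j + 1 ≤ m + 1 → (GV X (1 + X) k m : Polynomial ℝ).coeff j ≤
      (GV X (1 + X) k m).coeff (j + 1)) :=
  gsum_props (gam k m).2 (m + 1) (m + 2) (gam_support k m).2 _ rfl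

lemma GV_coeff_zero (k m : ℕ) : (GV X (1 + X) k m : Polynomial ℝ).coeff 0 = 0 := by
  unfold GV
  rw [coeff_gsum, Nat.cast_eq_zero]
  refine Finset.sum_eq_zero fun i _ => ?_
  rcases i with _ | i
  · have : (gam k m).2 0 = 0 := by rcases m with _ | m <;> rfl
    rw [this, zero_mul]
  · simp [TT]

lemma reflect_coeff {p : Polynomial ℝ} {N j : ℕ} (h : p.reflect N = p) (hj : j ≤ N) :
    p.coeff j = p.coeff (N - j) := by
  conv_lhs => rw [← h]
  rw [coeff_reflect, revAt_le hj]

lemma uniq_dec (k m : ℕ) (a b : Polynomial ℝ)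
    (hdec : GU X (1 + X) k m + GV X (1 + X) k m = a + X * b)
    (ha1 : a.natDegree ≤ m) (ha2 : a.reflect m = a)
    (hb1 : b.natDegree ≤ m - 1) (hb2 : b.reflect (m - 1) = b) :
    X * b = GV X (1 + X) k m := by
  obtain ⟨hU1, hU2, -⟩ := GU_props k m
  obtain ⟨hV1, hV2, -⟩ := GV_props k m
  have hV0 := GV_coeff_zero k m
  set U : Polynomial ℝ := GU X (1 + X) k m
  set V : Polynomial ℝ := GV X (1 + X) k m
  have hc : ∀ j, U.coeff j + V.coeff j = a.coeff j + (X * b).coeff j := by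
    intro j
    rw [← coeff_add, ← coeff_add, hdec]
  have hy0 : (X * b).coeff 0 = 0 := by simp
  have habig : ∀ j, m < j → a.coeff j = 0 := fun j hj =>
    coeff_eq_zero_of_natDegree_lt (by omega)
  have key : ∀ j, (X * b).coeff j = V.coeff j := by
    intro j
    induction j with
    | zero => rw [hy0, hV0]
    | succ j ih =>
      by_cases hj : j + 1 ≤ m
      · have e1 := hc (j + 1)
        have e2 : a.coeff (j + 1) = a.coeff (m - (j + 1)) := reflect_coeff ha2 hj
        have e3 := hU1 (j + 1) hj
        have e4 := hc (m - (j + 1))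
        have e5 := hV1 (m - (j + 1)) (by omega)
        rw [show m + 1 - (m - (j + 1)) = j + 1 + 1 by omega] at e5
        have e6 := hc j
        have e7 := hU1 j (by omega)
        have e8 : a.coeff j = a.coeff (m - j) := reflect_coeff ha2 (by omega)
        have e9 := hc (m - j)
        have e10 := hV1 (m - j) (by omega)
        rw [show m + 1 - (m - j) = j + 1 by omega] at e10
        have e11 : (X * b).coeff (m - j) = (X * b).coeff (j + 1) := by
          rw [show m - j = (m - 1 - j) + 1 by omega, coeff_X_mul, coeff_X_mul]
          exact (reflect_coeff hb2 (by omega)).symm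
        linarith
      · have e1 := hc (j + 1)
        rw [habig _ (by omega), hU2 _ (by omega)] at e1
        linarith
  exact Polynomial.ext key

/-- The second half of the main theorem: in the symmetric decomposition
`A_n^{(k)} = a + x·b`, the part `x·b` is γ-positive with center `n/2`:
`x·b = Σ_{i=1}^{⌊n/2⌋} γ̂_{n,k,i} x^i (1+x)^{n-2i}`, where `γ̂_{n,k,i}` counts the
increasing pruned even `k`-ary forests on `{1,…,n}` whose rightmost tree is neither a
singleton nor has its first `k-1` root-children all leaves, having `i` old leaves, no
young leaves, and no removable old or removable young leaves.  In particular
`A_n^{(k)}` is bi-γ-positive and hence alternating increasing. -/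
theorem b_part_gamma_positive (n k : ℕ) (hn : 1 ≤ n) (hk : 1 ≤ k)
    (a b : Polynomial ℝ)
    (hdec : Apoly k n = a + X * b)
    (ha1 : a.natDegree ≤ n - 1) (ha2 : a.reflect (n - 1) = a)
    (hb1 : b.natDegree ≤ n - 2) (hb2 : b.reflect (n - 2) = b) :
    (X * b = ∑ i ∈ Finset.Icc 1 (n / 2),
      C ((Nat.card {f : Fin n → Option (Fin n × Fin k) //
            IsForest f ∧ inHatClass f ∧ oleafStat f = i ∧ NoYoungLeaf f ∧
              (∀ u, ¬ removableOldLeaf f u) ∧ (∀ u, ¬ removableYoungLeaf f u)} : ℕ) : ℝ) *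
        X ^ i * (1 + X) ^ (n - 2 * i)) ∧
    (∀ j : ℕ, 2 * j ≤ n - 1 → (Apoly k n).coeff j ≤ (Apoly k n).coeff (n - 1 - j)) ∧
    (∀ j : ℕ, 2 * j + 1 ≤ n - 1 →
      (Apoly k n).coeff (n - 1 - j) ≤ (Apoly k n).coeff (j + 1)) := by
  obtain ⟨m, rfl⟩ : ∃ m, n = m + 1 := ⟨n - 1, by omega⟩
  simp only [Nat.add_sub_cancel] at ha1 ha2 ⊢
  have hA := Apoly_eq hk m
  obtain ⟨hU1, hU2, hU3⟩ := GU_props k m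
  obtain ⟨hV1, hV2, hV3⟩ := GV_props k m
  refine ⟨?_, ?_, ?_⟩
  · rw [← GV_forest hk m]
    exact uniq_dec k m a b (by rw [← hA, hdec]) ha1 ha2 (by simpa using hb1) (by simpa using hb2)
  · intro j hj
    rw [hA, coeff_add, coeff_add, ← hU1 j (by omega), hV1 (m - j) (by omega),
      show m + 1 - (m - j) = j + 1 by omega]
    have := hV3 j (by omega)
    linarith
  · intro j hj
    rw [hA, coeff_add, coeff_add, ← hU1 j (by omega), hV1 (m - j) (by omega),
      show m + 1 - (m - j) = j + 1 by omega]
    have := hU3 j (by omega)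
    linarith

end
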